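/- arXiv:2206.11716 — 3 statements merged into one kernel-verified Lean document; each statement's English description precedes it below -/
import Mathlib

section
/- Let D be a minimal normal subgroup of a finite group G which is a direct product of s ≥ 2 isomorphic non-abelian simple groups (so D is non-simple and non-solvable). Then every irreducible character χ of G whose kernel does not contain D satisfies χ(1) ≥ 6. -/
open scoped BigOperators Classical
open CategoryTheory

/-- `χ : G → ℂ` is the character of an irreducible complex representation of `G`. -/
def IsIrrChar (G : Type) [Group G] (χ : G → ℂ) : Prop :=
  ∃ V : FDRep ℂ G, Simple V ∧ ∀ g, V.character g = χ g

/-- A character is rational-valued if all its values lie in `ℚ`. -/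
def RatValued {G : Type} (χ : G → ℂ) : Prop := ∀ g, ∃ q : ℚ, χ g = (q : ℂ)

/-- A character is real-valued if all its values lie in `ℝ`. -/
def RealValued {G : Type} (χ : G → ℂ) : Prop := ∀ g, (χ g).im = 0

/-- A character has even degree. -/
def EvenDeg {G : Type} [One G] (χ : G → ℂ) : Prop := ∃ k : ℕ, χ 1 = ((2 * k : ℕ) : ℂ)

/-- The kernel of the character `χ` contains the subgroup `N`. -/
def KerContains {G : Type} [Group G] (χ : G → ℂ) (N : Subgroup G) : Prop :=
  ∀ n ∈ N, χ n = χ 1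

/-- The induced class function `f ^ G` of `f : N → ℂ`. -/
noncomputable def Ind {G : Type} [Group G] [Fintype G] (N : Subgroup G) (f : ↥N → ℂ) : G → ℂ :=
  fun g => (Nat.card N : ℂ)⁻¹ *
    ∑ x : G, if h : x⁻¹ * g * x ∈ N then f ⟨x⁻¹ * g * x, h⟩ else 0

/-- The standard inner product of class functions on a finite group. -/
noncomputable def cInner {G : Type} [Fintype G] (f g : G → ℂ) : ℂ :=
  (Fintype.card G : ℂ)⁻¹ * ∑ x : G, f x * (starRingEnd ℂ) (g x)

/-- `χ` is an irreducible constituent of the class function `f`. -/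
def IsConstituent {G : Type} [Group G] [Fintype G] (f χ : G → ℂ) : Prop :=
  IsIrrChar G χ ∧ cInner f χ ≠ 0

lemma lam_congr {G : Type} [Group G] {N : Subgroup G} (lam : ↥N → ℂ)
    {x y : G} (px : x ∈ N) (py : y ∈ N) (h : x = y) : lam ⟨x, px⟩ = lam ⟨y, py⟩ := by
  subst h; rfl

/-- The inertia group `I_G(λ)` of a character `λ` of a normal subgroup `N` of `G`. -/
def inertia {G : Type} [Group G] (N : Subgroup G) [hN : N.Normal] (lam : ↥N → ℂ) :
    Subgroup G where
  carrier := {g | ∀ n : ↥N, lam ⟨g * n * g⁻¹, hN.conj_mem n n.2 g⟩ = lam n}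
  one_mem' := by
    intro n
    exact lam_congr lam _ n.2 (by group)
  mul_mem' := by
    intro a b ha hb n
    have h1 := ha ⟨(b : G) * n * b⁻¹, hN.conj_mem _ n.2 b⟩
    calc lam ⟨(a * b) * n * (a * b)⁻¹, _⟩
        = lam ⟨a * ((b : G) * n * b⁻¹) * a⁻¹, hN.conj_mem _ (hN.conj_mem _ n.2 b) a⟩ :=
          lam_congr lam _ _ (by group)
      _ = lam ⟨(b : G) * n * b⁻¹, hN.conj_mem _ n.2 b⟩ := h1
      _ = lam n := hb n
  inv_mem' := by
    intro a ha n
    have h1 := ha ⟨a⁻¹ * (n : G) * a⁻¹⁻¹, hN.conj_mem _ n.2 a⁻¹⟩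
    have h2 : lam ⟨a * (a⁻¹ * (n : G) * a⁻¹⁻¹) * a⁻¹,
        hN.conj_mem _ (hN.conj_mem _ n.2 a⁻¹) a⟩ = lam n :=
      lam_congr lam _ n.2 (by group)
    exact h1.symm.trans h2

section Helpers

open Module

/-- A homomorphism with commuting values from a non-abelian simple group is trivial. -/
lemma hom_trivial_of_comm {S : Type*} [Group S] [IsSimpleGroup S]
    (hnonab : ¬ ∀ a b : S, a * b = b * a) {M : Type*} [Monoid M] (f : S →* M)
    (hc : ∀ a b, f a * f b = f b * f a) : ∀ g, f g = 1 := by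
  rcases (MonoidHom.normal_ker f.toHomUnits).eq_bot_or_eq_top with h | h
  · exfalso
    apply hnonab
    intro a b
    apply (MonoidHom.ker_eq_bot_iff _).1 h
    ext
    simpa using hc a b
  · intro g
    have : g ∈ f.toHomUnits.ker := by rw [h]; trivial
    rw [MonoidHom.mem_ker] at this
    simpa using congrArg Units.val this

lemma hom_inj_of_nontrivial {S : Type*} [Group S] [IsSimpleGroup S]
    {M : Type*} [Monoid M] (f : S →* M) (hf : ¬ ∀ g, f g = 1) : Function.Injective f := by
  rcases (MonoidHom.normal_ker f.toHomUnits).eq_bot_or_eq_top with h | h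
  · intro a b hab
    apply (MonoidHom.ker_eq_bot_iff _).1 h
    ext
    simpa using hab
  · exfalso
    apply hf
    intro g
    have : g ∈ f.toHomUnits.ker := by rw [h]; trivial
    rw [MonoidHom.mem_ker] at this
    simpa using congrArg Units.val this

lemma mat_two_sq (A : Matrix (Fin 2) (Fin 2) ℂ) : A * A = A.trace • A - A.det • 1 := by
  ext i j
  fin_cases i <;> fin_cases j <;>
    simp [Matrix.mul_apply, Fin.sum_univ_two, Matrix.trace_fin_two, Matrix.det_fin_two] <;> ring

lemma mat_two_comm (A B C : Matrix (Fin 2) (Fin 2) ℂ) (hA : A * B = B * A) (hC : C * B = B * C)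
    (hB : ¬ ∃ c : ℂ, B = c • 1) : A * C = C * A := by
  have a00 := congrFun (congrFun hA 0) 0
  have a01 := congrFun (congrFun hA 0) 1
  have a10 := congrFun (congrFun hA 1) 0
  have c00 := congrFun (congrFun hC 0) 0
  have c01 := congrFun (congrFun hC 0) 1
  have c10 := congrFun (congrFun hC 1) 0
  simp only [Matrix.mul_apply, Fin.sum_univ_two] at a00 a01 a10 c00 c01 c10
  have key : B 0 1 ≠ 0 ∨ B 1 0 ≠ 0 ∨ B 0 0 - B 1 1 ≠ 0 := by
    by_contra! h
    obtain ⟨h1, h2, h3⟩ := h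
    apply hB
    refine ⟨B 0 0, ?_⟩
    ext i j
    fin_cases i <;> fin_cases j <;> simp [h1, h2]
    linear_combination -h3
  have e1 : A 0 1 * C 1 0 = C 0 1 * A 1 0 := by
    rcases key with h | h | h <;> apply mul_left_cancel₀ h <;> grind
  have e2 : A 0 1 * (C 0 0 - C 1 1) = C 0 1 * (A 0 0 - A 1 1) := by
    rcases key with h | h | h <;> apply mul_left_cancel₀ h <;> grind
  have e3 : A 1 0 * (C 0 0 - C 1 1) = C 1 0 * (A 0 0 - A 1 1) := by
    rcases key with h | h | h <;> apply mul_left_cancel₀ h <;> grind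
  ext i j
  fin_cases i <;> fin_cases j <;> simp [Matrix.mul_apply, Fin.sum_univ_two] <;> grind

variable {V : Type*} [AddCommGroup V] [Module ℂ V] [FiniteDimensional ℂ V]

lemma lin_two_sq (h2 : finrank ℂ V = 2) (A : V →ₗ[ℂ] V) :
    A * A = LinearMap.trace ℂ V A • A - LinearMap.det A • 1 := by
  let b := finBasisOfFinrankEq ℂ V h2
  apply (LinearMap.toMatrixAlgEquiv b).injective
  have := mat_two_sq (LinearMap.toMatrixAlgEquiv b A)
  rw [map_mul, this, map_sub, map_smul, map_smul, map_one]
  rw [LinearMap.trace_eq_matrix_trace ℂ b, ← LinearMap.det_toMatrix b]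
  rfl

lemma lin_two_comm (h2 : finrank ℂ V = 2) (A B C : V →ₗ[ℂ] V) (hA : A * B = B * A)
    (hC : C * B = B * C) (hB : ¬ ∃ c : ℂ, B = c • 1) : A * C = C * A := by
  let b := finBasisOfFinrankEq ℂ V h2
  let φ := LinearMap.toMatrixAlgEquiv b
  apply φ.injective
  rw [map_mul, map_mul]
  apply mat_two_comm _ (φ B) _
  · rw [← map_mul, hA, map_mul]
  · rw [← map_mul, hC, map_mul]
  · rintro ⟨c, hc⟩
    apply hB
    refine ⟨c, φ.injective ?_⟩
    rw [hc, map_smul, map_one]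

/-- A non-abelian finite simple group has no nontrivial representation of degree at most two. -/
lemma rep_trivial_of_le_two {S : Type*} [Group S] [Finite S] [IsSimpleGroup S]
    (hnonab : ¬ ∀ a b : S, a * b = b * a) (ρ : Representation ℂ S V)
    (h : finrank ℂ V ≤ 2) : ∀ g, ρ g = 1 := by
  by_contra hnt
  have hinj := hom_inj_of_nontrivial ρ hnt
  have hncomm : ¬ ∀ a b, ρ a * ρ b = ρ b * ρ a := fun hc => hnt (hom_trivial_of_comm hnonab ρ hc)
  have h2 : finrank ℂ V = 2 := by
    by_contra hne
    have h1 : finrank ℂ V ≤ 1 := by omega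
    apply hncomm
    obtain ⟨v, hv⟩ := finrank_le_one_iff.1 h1
    have key : ∀ g, ∃ c : ℂ, ∀ w, ρ g w = c • w := by
      intro g
      obtain ⟨c, hc⟩ := hv (ρ g v)
      refine ⟨c, fun w => ?_⟩
      obtain ⟨d, rfl⟩ := hv w
      rw [map_smul, ← hc, smul_comm]
    intro a b
    obtain ⟨c, hc⟩ := key a
    obtain ⟨d, hd⟩ := key b
    ext w
    simp only [Module.End.mul_apply, hc, hd]
    rw [smul_comm]
  have hdet : ∀ g, LinearMap.det (ρ g) = 1 := by
    have := hom_trivial_of_comm hnonab ((LinearMap.det : (V →ₗ[ℂ] V) →* ℂ).comp ρ)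
      (fun a b => mul_comm _ _)
    exact this
  have hsq : ∀ g, ρ (g * g) = ρ.character g • ρ g - 1 := by
    intro g
    rw [map_mul, lin_two_sq h2, hdet, one_smul]; rfl
  have hinvt : ∀ g, ρ.character g⁻¹ = ρ.character g := by
    intro g
    have e : ρ g = ρ.character g • 1 - ρ g⁻¹ := by
      have := congrArg (fun f => f * ρ g⁻¹) (hsq g)
      simpa only [sub_mul, smul_mul_assoc, ← map_mul, mul_inv_cancel_right, mul_inv_cancel,
        map_one, one_mul] using this
    have := congrArg (LinearMap.trace ℂ V) e
    rw [map_sub, map_smul, LinearMap.trace_one, h2] at this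
    change ρ.character g = _ - ρ.character g⁻¹ at this
    rw [smul_eq_mul] at this
    push_cast at this
    linear_combination this
  have hchsq : ∀ g, ρ.character (g * g) = ρ.character g * ρ.character g - 2 := by
    intro g
    have := congrArg (LinearMap.trace ℂ V) (hsq g)
    rw [map_sub, map_smul, LinearMap.trace_one, h2] at this
    exact_mod_cast this
  cases nonempty_fintype S
  have hodd : (Nat.card S).Coprime 2 := by
    rw [Nat.coprime_comm, Nat.Prime.coprime_iff_not_dvd Nat.prime_two]
    intro hdvd
    have : Fact (Nat.Prime 2) := ⟨Nat.prime_two⟩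
    obtain ⟨t, ht⟩ := exists_prime_orderOf_dvd_card' 2 hdvd
    have htt : t * t = 1 := by rw [← pow_two, ← ht, pow_orderOf_eq_one]
    have ht1 : t ≠ 1 := by
      rintro rfl
      simp at ht
    have e := hsq t
    rw [htt, map_one] at e
    have e2 : ρ.character t • ρ t = (2 : ℂ) • (1 : V →ₗ[ℂ] V) := by
      rw [two_smul]; exact (eq_sub_iff_add_eq.1 e).symm
    have hne : ρ.character t ≠ 0 := by
      intro h0
      rw [h0, zero_smul] at e2
      have : Nontrivial V := nontrivial_of_finrank_pos (R := ℂ) (by omega)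
      have h3 : (1 : V →ₗ[ℂ] V) = 0 := by
        have := e2.symm
        rcases smul_eq_zero.1 this with h | h
        · norm_num at h
        · exact h
      exact one_ne_zero h3
    have e3 : ρ t = ((ρ.character t)⁻¹ * 2) • (1 : V →ₗ[ℂ] V) := by
      rw [mul_smul, ← e2, smul_smul, inv_mul_cancel₀ hne, one_smul]
    have hcen : t ∈ Subgroup.center S := by
      rw [Subgroup.mem_center_iff]
      intro g
      apply hinj
      rw [map_mul, map_mul, e3]
      simp
    rcases (inferInstance : (Subgroup.center S).Normal).eq_bot_or_eq_top with hb | hb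
    · rw [hb] at hcen
      exact ht1 (Subgroup.mem_bot.1 hcen)
    · apply hnonab
      intro a b
      have : b ∈ Subgroup.center S := by rw [hb]; trivial
      exact (Subgroup.mem_center_iff.1 this a)
  have hcard : (Nat.card S : ℂ) ≠ 0 := by exact_mod_cast Nat.card_pos.ne'
  let _ : Invertible (Nat.card S : ℂ) := invertibleOfNonzero hcard
  have s1 := ρ.card_inv_mul_sum_char_eq_finrank
  have s2 := (ρ.linHom ρ).card_inv_mul_sum_char_eq_finrank
  have s3 : ∑ g : S, ρ.character g = ∑ g : S, ρ.character (g * g) := by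
    rw [← Equiv.sum_comp (powCoprime hodd)]
    simp [powCoprime, pow_two]
  have s4 : ∑ g : S, (ρ.linHom ρ).character g = ∑ g : S, ρ.character g + Nat.card S * 2 := by
    rw [s3]
    simp only [hchsq, Representation.char_linHom, hinvt, Finset.sum_sub_distrib]
    simp
  rw [s4, mul_add, s1, inv_mul_cancel_left₀ hcard] at s2
  have s5 : finrank ℂ ρ.invariants + 2 = finrank ℂ (ρ.linHom ρ).invariants := by
    exact_mod_cast s2
  have : ∃ B ∈ (ρ.linHom ρ).invariants, ¬ ∃ c : ℂ, B = c • (1 : V →ₗ[ℂ] V) := by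
    by_contra! hall
    have hle : (ρ.linHom ρ).invariants ≤ Submodule.span ℂ {(1 : V →ₗ[ℂ] V)} := by
      intro B hB
      obtain ⟨c, hc⟩ := hall B hB
      rw [Submodule.mem_span_singleton]
      exact ⟨c, hc.symm⟩
    have h1 := Submodule.finrank_mono hle
    have h3 := finrank_span_le_card (R := ℂ) ({(1 : V →ₗ[ℂ] V)} : Set (V →ₗ[ℂ] V))
    simp at h3
    omega
  obtain ⟨B, hB, hBs⟩ := this
  have hBc : ∀ g, ρ g * B = B * ρ g := by
    intro g
    have := (Representation.mem_invariants _ _).1 hB g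
    rw [Representation.linHom_apply] at this
    have h4 : ρ g * B * ρ g⁻¹ = B := this
    calc ρ g * B = ρ g * B * ρ g⁻¹ * ρ g := by
          rw [mul_assoc, ← map_mul, inv_mul_cancel, map_one, mul_one]
      _ = B * ρ g := by rw [h4]
  exact hncomm fun a b => lin_two_comm h2 _ B _ (hBc a) (hBc b) hBs

/-- Relative version: a representation is trivial on any invariant subspace of dimension `≤ 2`. -/
lemma rep_trivial_on {S : Type*} [Group S] [Finite S] [IsSimpleGroup S]
    (hnonab : ¬ ∀ a b : S, a * b = b * a) (ρ : Representation ℂ S V) (W : Submodule ℂ V)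
    (hW : ∀ g, ∀ w ∈ W, ρ g w ∈ W) (h : finrank ℂ W ≤ 2) : ∀ g, ∀ w ∈ W, ρ g w = w := by
  intro g w hw
  have := rep_trivial_of_le_two hnonab (ρ.subrepresentation W hW) h g
  have := congrArg Subtype.val (LinearMap.congr_fun this ⟨w, hw⟩)
  exact this

lemma six_le {S : Type*} [Group S] [Finite S] [IsSimpleGroup S]
    (hnonab : ¬ ∀ a b : S, a * b = b * a) (ρ σ : Representation ℂ S V)
    (hcomm : ∀ x y, ρ x * σ y = σ y * ρ x) (hρ : ¬ ∀ g, ρ g = 1) (hσ : ¬ ∀ g, σ g = 1) :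
    6 ≤ finrank ℂ V := by
  by_contra! hlt
  cases nonempty_fintype S
  have hcard : (Fintype.card S : ℂ) ≠ 0 := by exact_mod_cast Fintype.card_ne_zero
  let _ : Invertible (Fintype.card S : ℂ) := invertibleOfNonzero hcard
  set P := ρ.averageMap with hP
  have hPapp : ∀ v, P v = (Fintype.card S : ℂ)⁻¹ • ∑ g : S, ρ g v := by
    intro v
    simp [hP, Representation.averageMap, GroupAlgebra.average, LinearMap.sum_apply]
  have hPinv : ∀ v, P v ∈ ρ.invariants := ρ.averageMap_invariant
  have hPid : ∀ v ∈ ρ.invariants, P v = v := ρ.averageMap_id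
  have hc : ∀ x y v, ρ x (σ y v) = σ y (ρ x v) := fun x y v => LinearMap.congr_fun (hcomm x y) v
  have hPσ : ∀ y v, P (σ y v) = σ y (P v) := by
    intro y v
    simp [hPapp, hc]
  have hPρ : ∀ x v, P (ρ x v) = P v := by
    intro x v
    rw [hPapp, hPapp]
    congr 1
    rw [← Equiv.sum_comp (Equiv.mulRight x) (fun g => ρ g v)]
    simp
  have hinter : ∀ w, P w = 0 → w ∈ ρ.invariants → w = 0 := by
    intro w h1 h2
    rw [← hPid w h2, h1]
  let W := LinearMap.ker P
  have hWρ : ∀ g, ∀ w ∈ W, ρ g w ∈ W := by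
    intro g w hw
    rw [LinearMap.mem_ker] at hw ⊢
    rw [hPρ, hw]
  have hWσ : ∀ g, ∀ w ∈ W, σ g w ∈ W := by
    intro g w hw
    rw [LinearMap.mem_ker] at hw ⊢
    rw [hPσ, hw, map_zero]
  have hIσ : ∀ g, ∀ w ∈ ρ.invariants, σ g w ∈ ρ.invariants := by
    intro g w hw x
    rw [hc, hw x]
  -- any invariant subspace of `W` of dimension at most two vanishes
  have hsmall : ∀ U : Submodule ℂ V, U ≤ W → (∀ g, ∀ w ∈ U, ρ g w ∈ U) → finrank ℂ U ≤ 2 →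
      U = ⊥ := by
    intro U hUW hU h2
    rw [Submodule.eq_bot_iff]
    intro u hu
    exact hinter u (hUW hu) (fun g => rep_trivial_on hnonab ρ U hU h2 g u hu)
  have hdecomp : ∀ v, v - P v ∈ W := by
    intro v
    rw [LinearMap.mem_ker, map_sub, hPid _ (hPinv v), sub_self]
  have hWne : W ≠ ⊥ := by
    intro hb
    apply hρ
    intro g
    ext v
    have : v - P v = 0 := by
      have := hdecomp v
      rwa [hb, Submodule.mem_bot] at this
    rw [sub_eq_zero.1 this]
    exact hPinv v g
  have hW3 : 3 ≤ finrank ℂ W := by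
    by_contra! h
    exact hWne (hsmall W le_rfl hWρ (by omega))
  have hrange : LinearMap.range P = ρ.invariants := by
    apply le_antisymm
    · rintro _ ⟨v, rfl⟩
      exact hPinv v
    · intro v hv
      exact ⟨v, hPid v hv⟩
  have hrn := LinearMap.finrank_range_add_finrank_ker P
  rw [hrange] at hrn
  have hI2 : finrank ℂ ρ.invariants ≤ 2 := by
    have : finrank ℂ W = finrank ℂ (LinearMap.ker P) := rfl
    omega
  have hσI := rep_trivial_on hnonab σ ρ.invariants hIσ hI2
  -- each `σ y` is scalar on `W`
  have hscal : ∀ y, ∃ μ : ℂ, ∀ w ∈ W, σ y w = μ • w := by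
    intro y
    let T : W →ₗ[ℂ] W := (σ y).restrict (hWσ y)
    have : Nontrivial W := (Submodule.nontrivial_iff_ne_bot).2 hWne
    obtain ⟨μ, hμ⟩ := Module.End.exists_eigenvalue T
    refine ⟨μ, ?_⟩
    obtain ⟨w0, hw0⟩ := hμ.exists_hasEigenvector
    let N : W →ₗ[ℂ] W := T - μ • 1
    have hN : ∀ w : W, ((N w : W) : V) = σ y w - μ • (w : V) := by
      intro w; rfl
    have hrnN := LinearMap.finrank_range_add_finrank_ker N
    let K := (LinearMap.ker N).map W.subtype
    let R := (LinearMap.range N).map W.subtype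
    have fK : finrank ℂ K = finrank ℂ (LinearMap.ker N) :=
      Submodule.finrank_map_subtype_eq _ _
    have fR : finrank ℂ R = finrank ℂ (LinearMap.range N) :=
      Submodule.finrank_map_subtype_eq _ _
    have hKW : K ≤ W := Submodule.map_subtype_le _ _
    have hRW : R ≤ W := Submodule.map_subtype_le _ _
    have hKρ : ∀ g, ∀ w ∈ K, ρ g w ∈ K := by
      rintro g _ ⟨w, hw, rfl⟩
      refine ⟨⟨ρ g w, hWρ g w w.2⟩, ?_, rfl⟩
      rw [SetLike.mem_coe, LinearMap.mem_ker] at hw ⊢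
      ext
      have h1 := hN w
      rw [hw] at h1
      rw [hN]
      simp only [ZeroMemClass.coe_zero] at h1 ⊢
      rw [← hc, ← map_smul, ← map_sub, ← h1, map_zero]
    have hRρ : ∀ g, ∀ w ∈ R, ρ g w ∈ R := by
      rintro g _ ⟨_, ⟨w, rfl⟩, rfl⟩
      refine ⟨N ⟨ρ g w, hWρ g w w.2⟩, ⟨_, rfl⟩, ?_⟩
      simp only [Submodule.subtype_apply, hN]
      rw [← hc, ← map_smul, ← map_sub]
    have hKne : K ≠ ⊥ := by
      intro hb
      have hmem : (w0 : V) ∈ K := by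
        refine ⟨w0, ?_, rfl⟩
        rw [SetLike.mem_coe, LinearMap.mem_ker]
        have := hw0.apply_eq_smul
        simp [N, this]
      rw [hb, Submodule.mem_bot] at hmem
      exact hw0.2 (Subtype.ext hmem)
    have hK3 : 3 ≤ finrank ℂ K := by
      by_contra! h
      exact hKne (hsmall K hKW hKρ (by omega))
    have hWV : finrank ℂ W ≤ finrank ℂ V := Submodule.finrank_le W
    have hR0 : R = ⊥ := hsmall R hRW hRρ (by omega)
    intro w hw
    have hmem : (N ⟨w, hw⟩ : V) ∈ R := ⟨_, ⟨_, rfl⟩, rfl⟩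
    rw [hR0, Submodule.mem_bot, hN] at hmem
    exact sub_eq_zero.1 hmem
  apply hσ
  apply hom_trivial_of_comm hnonab σ
  intro a b
  obtain ⟨c, hca⟩ := hscal a
  obtain ⟨d, hdb⟩ := hscal b
  ext v
  simp only [Module.End.mul_apply]
  have hv : v = P v + (v - P v) := by abel
  rw [hv]
  have hw := hdecomp v
  simp only [map_add, hσI _ _ (hPinv v), hca _ hw, hdb _ hw, map_smul]
  rw [smul_comm]

end Helpers

/-- If a minimal normal subgroup `D` of `G` is a direct product of `s ≥ 2` copies of a
non-abelian simple group, then every irreducible character of `G` whose kernel does not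
contain `D` has degree at least `6`. -/
theorem stmt3 (G : Type) [Group G] [Fintype G] (D : Subgroup G) [hD : D.Normal]
    (hbot : D ≠ ⊥)
    (hmin : ∀ K : Subgroup G, K.Normal → K ≤ D → K = ⊥ ∨ K = D)
    (S : Type) [Group S] [Finite S] (hsimple : IsSimpleGroup S)
    (hnonab : ¬ ∀ a b : S, a * b = b * a)
    (s : ℕ) (hs : 2 ≤ s) (e : ↥D ≃* (Fin s → S)) :
    ∀ χ : G → ℂ, IsIrrChar G χ → ¬ KerContains χ D → (6 : ℝ) ≤ (χ 1).re := by
  rintro χ ⟨V, hV, hχ⟩ hker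
  have := hsimple
  let r : G →* (V →ₗ[ℂ] V) := V.ρ
  have hχ1 : (χ 1).re = (Module.finrank ℂ V : ℝ) := by
    rw [← hχ 1, FDRep.char_one]
    simp
  have hinj : ∀ d ∈ D, r d = 1 → d = 1 := by
    let K : Subgroup G := D ⊓ r.toHomUnits.ker
    have hmemK : ∀ d, d ∈ K ↔ d ∈ D ∧ r d = 1 := by
      intro d
      simp only [K, Subgroup.mem_inf, MonoidHom.mem_ker, Units.ext_iff]
      rfl
    have hKn : K.Normal := inferInstance
    rcases hmin K hKn inf_le_left with h | h
    · intro d hd h1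
      have : d ∈ K := (hmemK d).2 ⟨hd, h1⟩
      rw [h] at this
      exact Subgroup.mem_bot.1 this
    · exfalso
      apply hker
      intro n hn
      rw [← h] at hn
      have h1 := ((hmemK n).1 hn).2
      rw [← hχ, ← hχ]
      unfold FDRep.character
      change LinearMap.trace ℂ V (r n) = LinearMap.trace ℂ V (r 1)
      rw [h1, map_one r]
  let f : Fin s → (S →* (V →ₗ[ℂ] V)) := fun i =>
    ((r.comp D.subtype).comp e.symm.toMonoidHom).comp (MonoidHom.mulSingle (fun _ => S) i)
  have hfapp : ∀ i x, f i x = r (e.symm (Pi.mulSingle i x)) := fun i x => rfl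
  have hnt : ∀ i, ¬ ∀ g, f i g = 1 := by
    intro i hall
    obtain ⟨x, hx⟩ := exists_ne (1 : S)
    apply hx
    have h1 := hinj _ (e.symm (Pi.mulSingle i x)).2 (hall x)
    have h2 : e.symm (Pi.mulSingle i x) = 1 := Subtype.ext h1
    rw [map_eq_one_iff e.symm e.symm.injective] at h2
    simpa using h2
  have h6 := six_le hnonab (f ⟨0, by omega⟩) (f ⟨1, by omega⟩) (by
    intro x y
    rw [hfapp, hfapp, ← map_mul, ← map_mul, ← Subgroup.coe_mul, ← Subgroup.coe_mul,
      ← map_mul, ← map_mul]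
    rw [(Pi.mulSingle_commute (f := fun _ : Fin s => S) (by simp) x y).eq]) (hnt _) (hnt _)
  rw [hχ1]
  exact_mod_cast h6
end

section
/- Let G = M × C be a direct product of finite groups with M isomorphic to Alt_5 or Alt_6, and let φ be an irreducible character of C such that the set of non-linear rational-valued irreducible constituents of the induced character φ^G is nonempty. Then the average degree of the non-linear rational-valued irreducible constituents of φ^G is at least 9/2; moreover, if φ(1) > 1 or M ≅ Alt_6, this average exceeds 9/2. -/
open scoped BigOperators Classical
open CategoryTheory

section traces
variable {V : Type*} [AddCommGroup V] [Module ℂ V] [FiniteDimensional ℂ V]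

lemma sum_root_pow {N : ℕ} {ζ : ℂ} (hζ : IsPrimitiveRoot ζ N) {k : ℕ} (hk : k < N) (hk0 : k ≠ 0) :
    ∑ j ∈ Finset.range N, (ζ⁻¹) ^ (j * k) = 0 := by
  have h1 : ζ⁻¹ ^ k ≠ 1 := by
    intro h
    exact hζ.inv.pow_ne_one_of_pos_of_lt hk0 hk h
  have h2 : ∑ j ∈ Finset.range N, (ζ⁻¹) ^ (j * k) = ∑ j ∈ Finset.range N, (ζ⁻¹ ^ k) ^ j := by
    refine Finset.sum_congr rfl fun j _ => ?_
    rw [← pow_mul, mul_comm]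
  rw [h2, geom_sum_eq h1, ← pow_mul, mul_comm, pow_mul, hζ.inv.pow_eq_one]
  simp

lemma trace_pow_eq {N : ℕ} (hN : 0 < N) {ζ : ℂ} (hζ : IsPrimitiveRoot ζ N)
    (f : Module.End ℂ V) (hf : f ^ N = 1) :
    ∃ b : ℕ → ℕ, ∀ k : ℕ, LinearMap.trace ℂ V (f ^ k)
      = ∑ j ∈ Finset.range N, (b j : ℂ) * ζ ^ (j * k) := by
  have hζ0 : ζ ≠ 0 := hζ.ne_zero hN.ne'
  have hN0 : (N : ℂ) ≠ 0 := by exact_mod_cast hN.ne'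
  let P : ℕ → Module.End ℂ V := fun j =>
    (N : ℂ)⁻¹ • ∑ k ∈ Finset.range N, (ζ⁻¹ ^ (j * k)) • f ^ k
  have hfP : ∀ j, f * P j = ζ ^ j • P j := by
    intro j
    simp only [P, mul_smul_comm, Finset.mul_sum]
    rw [smul_comm]
    congr 1
    rw [Finset.smul_sum]
    have key : ∀ k, f * (ζ⁻¹ ^ (j * k)) • f ^ k
        = ζ ^ j • (ζ⁻¹ ^ (j * (k+1))) • f ^ (k+1) := by
      intro k
      rw [smul_smul, mul_smul_comm, pow_succ' f]
      congr 1
      rw [mul_add, pow_add, mul_one, mul_comm (ζ⁻¹ ^ (j*k)), ← mul_assoc, ← mul_pow,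
        mul_inv_cancel₀ hζ0]
      simp
    let F : ℕ → Module.End ℂ V := fun k => ζ ^ j • (ζ⁻¹ ^ (j * k)) • f ^ k
    have e1 : ∑ i ∈ Finset.range N, ζ⁻¹ ^ (j * i) • (f * f ^ i)
        = ∑ k ∈ Finset.range N, F (k+1) := by
      refine Finset.sum_congr rfl fun k _ => ?_
      rw [← mul_smul_comm]
      exact key k
    rw [e1]
    have h1 := Finset.sum_range_succ F N
    have h2 := Finset.sum_range_succ' F N
    have h3 : F N = F 0 := by
      simp only [F, hf, mul_zero, pow_zero]
      rw [mul_comm, pow_mul, hζ.inv.pow_eq_one, one_pow]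
    rw [h1, h3] at h2
    exact (add_right_cancel h2).symm
  have hfkP : ∀ j k, f ^ k * P j = ζ ^ (j * k) • P j := by
    intro j k
    induction k with
    | zero => simp
    | succ k ih =>
      rw [pow_succ', mul_assoc, ih, mul_smul_comm, hfP, smul_smul, ← pow_add]
      congr 2
  have hid : ∀ j, IsIdempotentElem (P j) := by
    intro j
    unfold IsIdempotentElem
    conv_lhs => enter [1]; simp only [P]
    rw [smul_mul_assoc, Finset.sum_mul]
    have : ∀ k ∈ Finset.range N, (ζ⁻¹ ^ (j * k)) • f ^ k * P j = P j := by
      intro k _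
      rw [smul_mul_assoc, hfkP, smul_smul, ← mul_pow, inv_mul_cancel₀ hζ0]
      simp
    rw [Finset.sum_congr rfl this]
    simp only [Finset.sum_const, Finset.card_range]
    rw [← Nat.cast_smul_eq_nsmul ℂ, smul_smul, inv_mul_cancel₀ hN0, one_smul]
  have hsum : ∑ j ∈ Finset.range N, P j = 1 := by
    simp only [P]
    rw [← Finset.smul_sum, Finset.sum_comm]
    simp_rw [← Finset.sum_smul]
    rw [Finset.sum_eq_single 0]
    · simp [smul_smul, hN0]
    · intro k hk hk0
      rw [sum_root_pow hζ (Finset.mem_range.1 hk) hk0, zero_smul]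
    · intro h
      exact absurd (Finset.mem_range.2 hN) h
  refine ⟨fun j => Module.finrank ℂ (LinearMap.range (P j)), fun k => ?_⟩
  have : f ^ k = ∑ j ∈ Finset.range N, ζ ^ (j * k) • P j := by
    rw [← mul_one (f ^ k), ← hsum, Finset.mul_sum]
    exact Finset.sum_congr rfl fun j _ => hfkP j k
  rw [this, map_sum]
  refine Finset.sum_congr rfl fun j _ => ?_
  rw [map_smul, (LinearMap.IsIdempotentElem.isProj_range (P j) (hid j)).trace, smul_eq_mul, mul_comm]

lemma trace_conj {N : ℕ} (hN : 0 < N) (f : Module.End ℂ V) (hf : f ^ N = 1) :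
    LinearMap.trace ℂ V (f ^ (N - 1)) = (starRingEnd ℂ) (LinearMap.trace ℂ V f) := by
  have hζ := Complex.isPrimitiveRoot_exp N hN.ne'
  set ζ := Complex.exp (2 * Real.pi * Complex.I / N)
  obtain ⟨b, hb⟩ := trace_pow_eq hN hζ f hf
  have h1 := hb 1
  rw [pow_one] at h1
  rw [hb, h1, map_sum]
  refine Finset.sum_congr rfl fun j _ => ?_
  rw [map_mul, map_pow, Complex.conj_natCast]
  congr 1
  have hn : (starRingEnd ℂ) ζ = ζ⁻¹ := by
    rw [Complex.inv_def, Complex.normSq_eq_norm_sq, hζ.norm'_eq_one hN.ne']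
    simp
  rw [hn, mul_one]
  have : ζ ^ (j * (N-1)) * ζ ^ j = 1 := by
    rw [← pow_add]
    have : j * (N-1) + j = N * j := by
      obtain ⟨m, rfl⟩ : ∃ m, N = m + 1 := ⟨N - 1, by omega⟩
      simp; ring
    rw [this, pow_mul, hζ.pow_eq_one, one_pow]
  rw [inv_pow]
  exact eq_inv_of_mul_eq_one_left this

lemma trace_prime {p : ℕ} (hp : p.Prime) (f : Module.End ℂ V) (hf : f ^ p = 1)
    (q : ℚ) (hq : LinearMap.trace ℂ V f = q) :
    ∃ a b : ℕ, Module.finrank ℂ V = a + (p - 1) * b ∧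
      LinearMap.trace ℂ V f = (a : ℂ) - b := by
  have hζ := Complex.isPrimitiveRoot_exp p hp.ne_zero
  set ζ := Complex.exp (2 * Real.pi * Complex.I / p)
  obtain ⟨b, hb⟩ := trace_pow_eq hp.pos hζ f hf
  have h0 := hb 0
  have h1 := hb 1
  haveI := Fact.mk hp
  have hpe : p = (p - 1) + 1 := by have := hp.pos; omega
  have h0' : (Module.finrank ℂ V : ℂ) = ((∑ j ∈ Finset.range p, b j : ℕ) : ℂ) := by
    rw [← LinearMap.trace_one]
    simpa using h0
  have h0'' : Module.finrank ℂ V = ∑ j ∈ Finset.range p, b j := by exact_mod_cast h0'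
  rw [pow_one, hq] at h1
  -- polynomial
  let Q : Polynomial ℚ := (∑ j ∈ Finset.range p, Polynomial.C (b j : ℚ) * Polynomial.X ^ j)
    - Polynomial.C q
  have hQ0 : Polynomial.aeval ζ Q = 0 := by
    simp only [Q, map_sub, map_sum, map_mul, map_pow, Polynomial.aeval_X, Polynomial.aeval_C]
    rw [sub_eq_zero]
    simpa using h1.symm
  have hdvd : Polynomial.cyclotomic p ℚ ∣ Q := by
    rw [Polynomial.cyclotomic_eq_minpoly_rat hζ hp.pos]
    exact minpoly.dvd ℚ ζ hQ0
  have hcoeff : ∀ j, Q.coeff j = (if j < p then (b j : ℚ) else 0) - if j = 0 then q else 0 := by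
    intro j
    simp [Q, Polynomial.coeff_C, Polynomial.finsetSum_coeff, Polynomial.coeff_X_pow]
  have hdeg : Q.natDegree ≤ p - 1 := by
    rw [Polynomial.natDegree_le_iff_coeff_eq_zero]
    intro N hN
    rw [hcoeff, if_neg (by omega), if_neg (by omega)]
    simp
  obtain ⟨R, hR⟩ := hdvd
  have hcd : (Polynomial.cyclotomic p ℚ).natDegree = p - 1 := by
    rw [Polynomial.natDegree_cyclotomic, Nat.totient_prime hp]
  have hRC : ∃ c : ℚ, R = Polynomial.C c := by
    by_cases hR0 : R = 0
    · exact ⟨0, by simp [hR0]⟩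
    have hm : Q.natDegree = (p - 1) + R.natDegree := by
      rw [hR, Polynomial.natDegree_mul (Polynomial.cyclotomic_ne_zero p ℚ) hR0, hcd]
    exact ⟨_, Polynomial.eq_C_of_natDegree_eq_zero (by omega)⟩
  obtain ⟨c, rfl⟩ := hRC
  have hcoeff2 : ∀ j, j < p → Q.coeff j = c := by
    intro j hj
    rw [hR, Polynomial.coeff_mul_C, Polynomial.cyclotomic_prime]
    simp [Polynomial.finsetSum_coeff, Polynomial.coeff_X_pow, hj]
  have hb1 : ∀ j, j < p → j ≠ 0 → b j = b 1 := by
    intro j hj hj0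
    have e1 := hcoeff2 j hj
    have e2 := hcoeff2 1 hp.one_lt
    rw [hcoeff, if_pos hj, if_neg hj0] at e1
    rw [hcoeff, if_pos hp.one_lt, if_neg one_ne_zero] at e2
    have : (b j : ℚ) = b 1 := by linarith
    exact_mod_cast this
  refine ⟨b 0, b 1, ?_, ?_⟩
  · rw [h0'', hpe, Finset.sum_range_succ']
    rw [Finset.sum_congr rfl (g := fun _ => b 1)]
    · simp [add_comm]
    · intro j hj
      have := Finset.mem_range.1 hj
      exact hb1 _ (by omega) (by omega)
  · have e1 := hcoeff2 0 hp.pos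
    have e2 := hcoeff2 1 hp.one_lt
    rw [hcoeff, if_pos hp.pos, if_pos rfl] at e1
    rw [hcoeff, if_pos hp.one_lt, if_neg one_ne_zero] at e2
    have : q = (b 0 : ℚ) - b 1 := by linarith
    rw [hq, this]
    push_cast
    rfl

end traces

section chars

lemma fdrep_char_inv {G : Type} [Group G] [Finite G] (V : FDRep ℂ G) (g : G) :
    V.character g⁻¹ = (starRingEnd ℂ) (V.character g) := by
  have hN : 0 < orderOf g := orderOf_pos g
  have hf : (V.ρ g : Module.End ℂ V) ^ orderOf g = 1 := by
    rw [← map_pow, pow_orderOf_eq_one, map_one]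
  have h := trace_conj hN (V.ρ g : Module.End ℂ V) hf
  have h2 : g ^ (orderOf g - 1) = g⁻¹ := by
    apply eq_inv_of_mul_eq_one_left
    rw [← pow_succ, Nat.sub_add_cancel hN, pow_orderOf_eq_one]
  rw [← map_pow, h2] at h
  exact h

variable {G : Type} [Group G] [Fintype G]

lemma IsIrrChar.inv {χ : G → ℂ} (h : IsIrrChar G χ) (g : G) :
    χ g⁻¹ = (starRingEnd ℂ) (χ g) := by
  obtain ⟨V, -, hV⟩ := h
  rw [← hV, ← hV, fdrep_char_inv]

lemma IsIrrChar.conj {χ : G → ℂ} (h : IsIrrChar G χ) (g x : G) :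
    χ (x * g * x⁻¹) = χ g := by
  obtain ⟨V, -, hV⟩ := h
  rw [← hV, ← hV, FDRep.char_conj]

lemma IsIrrChar.orth {χ ψ : G → ℂ} (h : IsIrrChar G χ) (h' : IsIrrChar G ψ) :
    cInner χ ψ = if χ = ψ then 1 else 0 := by
  obtain ⟨V, hVs, hV⟩ := h
  obtain ⟨W, hWs, hW⟩ := h'
  have : Invertible (Nat.card G : ℂ) := invertibleOfNonzero (NeZero.ne (Nat.card G : ℂ))
  have key := FDRep.char_orthonormal V W
  have e : cInner χ ψ = (Nat.card G : ℂ)⁻¹ * ∑ g : G, V.character g * W.character g⁻¹ := by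
    unfold cInner
    rw [Nat.card_eq_fintype_card]
    congr 1
    refine Finset.sum_congr rfl fun g _ => ?_
    rw [fdrep_char_inv, hV, hW]
  by_cases hiso : Nonempty (V ≅ W)
  · have hc : χ = ψ := by
      obtain ⟨i⟩ := hiso
      funext g
      rw [← hV, ← hW, FDRep.char_iso i]
    rw [e, key, if_pos hiso, if_pos hc]
  · by_cases hc : χ = ψ
    · exfalso
      have k2 := FDRep.char_orthonormal V V
      rw [if_pos ⟨Iso.refl V⟩] at k2
      rw [if_neg hiso] at key
      have : V.character = W.character := by
        funext g
        rw [hV, hW, hc]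
      rw [this] at k2
      rw [this, k2] at key
      exact one_ne_zero key
    · rw [e, key, if_neg hiso, if_neg hc]

lemma IsIrrChar.deg {χ : G → ℂ} (h : IsIrrChar G χ) : ∃ n : ℕ, 0 < n ∧ χ 1 = n ∧
    ∀ (p : ℕ) (g : G), p.Prime → g ^ p = 1 → RatValued χ →
      ∃ a b : ℕ, n = a + (p - 1) * b ∧ χ g = (a : ℂ) - b := by
  have ho := h.orth h
  obtain ⟨V, hVs, hV⟩ := h
  refine ⟨Module.finrank ℂ V, ?_, ?_, ?_⟩
  · rw [pos_iff_ne_zero]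
    intro h0
    have : Subsingleton V := Module.finrank_zero_iff.1 h0
    have hz : χ = 0 := by
      funext g
      rw [← hV]
      have : V.ρ g = 0 := Subsingleton.elim _ _
      simp [FDRep.character, this]
    rw [if_pos rfl, hz] at ho
    simp [cInner] at ho
  · rw [← hV, FDRep.char_one]
  · intro p g hp hg hr
    obtain ⟨q, hq⟩ := hr g
    have hf : (V.ρ g : Module.End ℂ V) ^ p = 1 := by
      rw [← map_pow, hg, map_one]
    have := trace_prime hp (V.ρ g : Module.End ℂ V) hf q (by rw [← hq, ← hV]; rfl)
    rw [← hV]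
    exact this

lemma isIrrChar_of_norm (V : FDRep ℂ G) (h : cInner V.character V.character = 1) :
    IsIrrChar G V.character := by
  refine ⟨V, ?_, fun _ => rfl⟩
  rw [FDRep.simple_iff_char_is_norm_one]
  unfold cInner at h
  have h0 : (Fintype.card G : ℂ) ≠ 0 := by exact_mod_cast Fintype.card_ne_zero
  rw [inv_mul_eq_one₀ h0] at h
  rw [Nat.card_eq_fintype_card, h]
  exact Finset.sum_congr rfl fun g _ => by rw [fdrep_char_inv]

lemma isIrrChar_one : IsIrrChar G (fun _ => 1) := by
  let V : FDRep ℂ G := FDRep.of (1 : G →* (ℂ →ₗ[ℂ] ℂ))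
  have hV : V.character = fun _ => 1 := by
    funext g
    have : V.character g = LinearMap.trace ℂ ℂ (1 : ℂ →ₗ[ℂ] ℂ) := rfl
    rw [this, LinearMap.trace_one]
    simp
  rw [← hV]
  apply isIrrChar_of_norm
  rw [hV]
  have h0 : (Fintype.card G : ℂ) ≠ 0 := by exact_mod_cast Fintype.card_ne_zero
  simp [cInner, h0]

lemma isIrrChar_mul {M C : Type} [Group M] [Group C] [Fintype M] [Fintype C]
    (e : G ≃* M × C) {ψ : M → ℂ} {φ : C → ℂ} (hψ : IsIrrChar M ψ) (hφ : IsIrrChar C φ) :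
    IsIrrChar G (fun g => ψ (e g).1 * φ (e g).2) := by
  have o1 := hψ.orth hψ
  have o2 := hφ.orth hφ
  rw [if_pos rfl] at o1 o2
  obtain ⟨V, -, hV⟩ := hψ
  obtain ⟨W, -, hW⟩ := hφ
  let A : Representation ℂ G V := V.ρ.comp ((MonoidHom.fst M C).comp e.toMonoidHom)
  let B : Representation ℂ G W := W.ρ.comp ((MonoidHom.snd M C).comp e.toMonoidHom)
  let X : FDRep ℂ G := FDRep.of (A.tprod B)
  have hX : X.character = fun g => ψ (e g).1 * φ (e g).2 := by
    funext g
    have h1 : X.character g = (A.tprod B).character g := rfl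
    rw [h1, Representation.char_tensor, Pi.mul_apply, ← hV, ← hW]
    rfl
  rw [← hX]
  apply isIrrChar_of_norm
  rw [hX]
  unfold cInner at *
  have : ∑ x : G, ψ (e x).1 * φ (e x).2 * (starRingEnd ℂ) (ψ (e x).1 * φ (e x).2)
    = ∑ y : M × C, ψ y.1 * φ y.2 * (starRingEnd ℂ) (ψ y.1 * φ y.2) :=
    e.toEquiv.sum_comp (fun y => ψ y.1 * φ y.2 * (starRingEnd ℂ) (ψ y.1 * φ y.2))
  rw [this, Fintype.sum_prod_type, Fintype.card_congr e.toEquiv, Fintype.card_prod]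
  have h3 : ∑ x : M, ∑ y : C, ψ x * φ y * (starRingEnd ℂ) (ψ x * φ y)
      = (∑ x : M, ψ x * (starRingEnd ℂ) (ψ x)) * ∑ y : C, φ y * (starRingEnd ℂ) (φ y) := by
    rw [Finset.sum_mul_sum]
    refine Finset.sum_congr rfl fun x _ => Finset.sum_congr rfl fun y _ => ?_
    rw [map_mul]; ring
  rw [h3]
  push_cast
  rw [mul_inv]
  calc _ = ((Fintype.card M : ℂ)⁻¹ * ∑ x : M, ψ x * (starRingEnd ℂ) (ψ x)) *
      ((Fintype.card C : ℂ)⁻¹ * ∑ y : C, φ y * (starRingEnd ℂ) (φ y)) := by ring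
    _ = 1 := by rw [o1, o2, one_mul]

lemma IsIrrChar.comp_equiv {M : Type} [Group M] [Fintype M] (e : G ≃* M) {ψ : M → ℂ}
    (hψ : IsIrrChar M ψ) : IsIrrChar G (fun g => ψ (e g)) := by
  have o1 := hψ.orth hψ
  rw [if_pos rfl] at o1
  obtain ⟨V, -, hV⟩ := hψ
  let X : FDRep ℂ G := FDRep.of (V.ρ.comp e.toMonoidHom)
  have hX : X.character = fun g => ψ (e g) := by
    funext g
    rw [← hV]
    rfl
  rw [← hX]
  apply isIrrChar_of_norm
  rw [hX, ← o1]
  unfold cInner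
  rw [Fintype.card_congr e.toEquiv]
  congr 1
  exact e.toEquiv.sum_comp (fun y => ψ y * (starRingEnd ℂ) (ψ y))

lemma irr_sum_zero {V : Type} [AddCommGroup V] [Module ℂ V] [FiniteDimensional ℂ V]
    (σ : Representation ℂ G V) [σ.IsIrreducible] (f : G → ℂ)
    (hf : ∀ g x, f (x * g * x⁻¹) = f g)
    (h : ∑ g, f g * σ.character g = 0) : ∑ g, f g • σ g = 0 := by
  set T : V →ₗ[ℂ] V := ∑ g, f g • σ g with hT
  have hcomm : ∀ x, T * σ x = σ x * T := by
    intro x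
    rw [hT, Finset.sum_mul, Finset.mul_sum]
    rw [← (MulAut.conj x).toEquiv.sum_comp]
    refine Finset.sum_congr rfl fun g _ => ?_
    have e1 : (MulAut.conj x).toEquiv g = x * g * x⁻¹ := rfl
    rw [e1, hf, smul_mul_assoc, mul_smul_comm, ← map_mul, ← map_mul]
    congr 2
    group
  let I : Representation.IntertwiningMap σ σ := { toLinearMap := T, isIntertwining' := hcomm }
  obtain ⟨c, hc⟩ :=
    (Representation.IsIrreducible.algebraMap_intertwiningMap_bijective_of_isAlgClosed
      (ρ := σ)).2 I
  have hTc : T = c • (1 : V →ₗ[ℂ] V) := by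
    ext v
    have : I v = c • v := by
      rw [← hc]
      rfl
    exact this
  have htr : LinearMap.trace ℂ V T = 0 := by
    rw [← h, hT, map_sum]
    exact Finset.sum_congr rfl fun g _ => by rw [map_smul]; rfl
  rw [hTc, map_smul, LinearMap.trace_one, smul_eq_mul, mul_eq_zero] at htr
  rcases htr with h0 | h0
  · rw [hTc, h0, zero_smul]
  · have : Module.finrank ℂ V = 0 := by exact_mod_cast h0
    have : Subsingleton V := Module.finrank_zero_iff.1 this
    exact Subsingleton.elim _ _

lemma isIrrChar_of_irreducible {V : Type} [AddCommGroup V] [Module ℂ V] [FiniteDimensional ℂ V]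
    (σ : Representation ℂ G V) [σ.IsIrreducible] : IsIrrChar G σ.character := by
  have hc : (FDRep.of σ).character = σ.character := rfl
  rw [← hc]
  apply isIrrChar_of_norm
  have : Invertible (Nat.card G : ℂ) := invertibleOfNonzero (NeZero.ne (Nat.card G : ℂ))
  have key := Representation.char_orthonormal σ σ
  rw [if_pos ⟨Representation.Equiv.refl σ⟩] at key
  rw [← key]
  unfold cInner
  rw [Nat.card_eq_fintype_card]
  congr 1
  exact Finset.sum_congr rfl fun g _ => by rw [← fdrep_char_inv]; rfl

lemma simple_module_zero (f : G → ℂ) (hf : ∀ g x, f (x * g * x⁻¹) = f g)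
    (h : ∀ χ, IsIrrChar G χ → ∑ g, f g * χ g = 0)
    (N : Type) [AddCommGroup N] [Module ℂ N] [Module (MonoidAlgebra ℂ G) N]
    [IsScalarTower ℂ (MonoidAlgebra ℂ G) N] [Module.Finite (MonoidAlgebra ℂ G) N]
    [hN : IsSimpleModule (MonoidAlgebra ℂ G) N] (a : N) :
    (∑ g, f g • MonoidAlgebra.single g (1 : ℂ) : MonoidAlgebra ℂ G) • a = 0 := by
  have hfin : FiniteDimensional ℂ N := Module.Finite.trans (MonoidAlgebra ℂ G) _
  let σ : Representation ℂ G N := Representation.ofModule' (k := ℂ) (G := G) N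
  have hσ : ∀ g (v : N), σ g v = (MonoidAlgebra.single g (1 : ℂ) : MonoidAlgebra ℂ G) • v :=
    fun g v => rfl
  have hnt : Nontrivial N := IsSimpleModule.nontrivial (MonoidAlgebra ℂ G) N
  have hirr : σ.IsIrreducible := by
    refine { exists_pair_ne := ⟨⊥, ⊤, ?_⟩, eq_bot_or_eq_top := ?_ }
    · intro hbt
      have := congrArg Subrepresentation.toSubmodule hbt
      exact bot_ne_top (α := Submodule ℂ N) this
    · intro W
      let W' : Submodule (MonoidAlgebra ℂ G) N :=
        { carrier := W.toSubmodule
          add_mem' := fun ha hb => W.toSubmodule.add_mem ha hb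
          zero_mem' := W.toSubmodule.zero_mem
          smul_mem' := by
            intro c v hv
            induction c using MonoidAlgebra.induction_on with
            | of x => exact W.apply_mem_toSubmodule x hv
            | add a b ha hb => rw [add_smul]; exact W.toSubmodule.add_mem ha hb
            | smul c a ha => rw [smul_assoc]; exact W.toSubmodule.smul_mem c ha }
      have hW : ∀ v, v ∈ W' ↔ v ∈ W.toSubmodule := fun v => Iff.rfl
      rcases eq_bot_or_eq_top W' with h0 | h0
      · left
        apply Subrepresentation.toSubmodule_injective
        ext v
        rw [← hW, h0]
        rfl
      · right
        apply Subrepresentation.toSubmodule_injective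
        ext v
        rw [← hW, h0]
        rfl
  have h0 := irr_sum_zero σ f hf (h _ (isIrrChar_of_irreducible σ))
  have h1 := LinearMap.congr_fun h0 a
  rw [LinearMap.sum_apply] at h1
  rw [Finset.sum_smul]
  simpa only [smul_assoc, hσ, LinearMap.smul_apply, LinearMap.zero_apply] using h1

lemma complete (f : G → ℂ) (hf : ∀ g x, f (x * g * x⁻¹) = f g)
    (h : ∀ χ, IsIrrChar G χ → ∑ g, f g * χ g = 0) : f = 0 := by
  let z : (MonoidAlgebra ℂ G) := ∑ g, f g • MonoidAlgebra.single g (1 : ℂ)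
  have : NeZero (Nat.card G : ℂ) := ⟨NeZero.ne _⟩
  have hss : IsSemisimpleModule (MonoidAlgebra ℂ G) (MonoidAlgebra ℂ G) := inferInstance
  have hz : ∀ a : (MonoidAlgebra ℂ G), z * a = a * z := by
    intro a
    induction a using MonoidAlgebra.induction_on with
    | of x =>
      simp only [z, MonoidAlgebra.of_apply, Finset.sum_mul, Finset.mul_sum]
      rw [← (MulAut.conj x).toEquiv.sum_comp]
      refine Finset.sum_congr rfl fun g _ => ?_
      have e1 : (MulAut.conj x).toEquiv g = x * g * x⁻¹ := rfl
      rw [e1, hf, smul_mul_assoc, mul_smul_comm, MonoidAlgebra.single_mul_single,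
        MonoidAlgebra.single_mul_single]
      congr 2
      group
    | add a b ha hb => rw [mul_add, add_mul, ha, hb]
    | smul c a ha => rw [mul_smul_comm, smul_mul_assoc, ha]
  let K : Submodule (MonoidAlgebra ℂ G) (MonoidAlgebra ℂ G) := LinearMap.ker (LinearMap.toSpanSingleton (MonoidAlgebra ℂ G) (MonoidAlgebra ℂ G) z)
  have hK : ∀ a, a ∈ K ↔ a * z = 0 := by
    intro a
    simp [K]
  have hle : sSup {N : Submodule (MonoidAlgebra ℂ G) (MonoidAlgebra ℂ G) | IsSimpleModule (MonoidAlgebra ℂ G) N} ≤ K := by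
    apply sSup_le
    intro N hN
    have hN' : IsSimpleModule (MonoidAlgebra ℂ G) N := hN
    intro a ha
    rw [hK, ← hz]
    have h5 := congrArg Subtype.val (simple_module_zero f hf h N ⟨a, ha⟩)
    exact h5
  rw [IsSemisimpleModule.sSup_simples_eq_top] at hle
  have h1 : (1 : (MonoidAlgebra ℂ G)) ∈ K := hle trivial
  rw [hK, one_mul] at h1
  funext g
  have h2 := congrArg (fun a : (MonoidAlgebra ℂ G) => a.coeff g) h1
  have h3 : z.coeff g = f g := by
    simp only [z]
    simp [Finsupp.single_apply]
  exact h3.symm.trans h2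

lemma exists_constituent (f : G → ℂ) (hf : ∀ g x, f (x * g * x⁻¹) = f g) (h1 : f 1 ≠ 0) :
    ∃ χ, IsIrrChar G χ ∧ ∑ g, f g * (starRingEnd ℂ) (χ g) ≠ 0 := by
  by_contra! hcon
  have := complete (fun g => (starRingEnd ℂ) (f g)) (fun g x => by simp only [hf]) ?_
  · have h2 := congrFun this 1
    simp at h2
    exact h1 h2
  · intro χ hχ
    have := congrArg (starRingEnd ℂ) (hcon χ hχ)
    simpa using this

end chars

section product
variable {G : Type} [Group G] [Fintype G]

lemma frob_recip (C : Subgroup G) (φ : ↥C → ℂ) {χ : G → ℂ} (hχ : IsIrrChar G χ) :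
    cInner (Ind C φ) χ = (Nat.card C : ℂ)⁻¹ * ∑ c : C, φ c * (starRingEnd ℂ) (χ c) := by
  unfold cInner _root_.Ind
  have h0 : (Fintype.card G : ℂ) ≠ 0 := by exact_mod_cast Fintype.card_ne_zero
  have h1 : ∀ g : G, ((Nat.card C : ℂ)⁻¹ *
      ∑ x : G, if h : x⁻¹ * g * x ∈ C then φ ⟨x⁻¹ * g * x, h⟩ else 0) * (starRingEnd ℂ) (χ g)
      = (Nat.card C : ℂ)⁻¹ * ∑ x : G, (if h : x⁻¹ * g * x ∈ C then φ ⟨x⁻¹ * g * x, h⟩ else 0)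
        * (starRingEnd ℂ) (χ g) := by
    intro g
    rw [mul_assoc, Finset.sum_mul]
  simp_rw [h1]
  rw [← Finset.mul_sum, Finset.sum_comm]
  have h2 : ∀ x : G, ∑ g : G, (if h : x⁻¹ * g * x ∈ C then φ ⟨x⁻¹ * g * x, h⟩ else 0)
        * (starRingEnd ℂ) (χ g) = ∑ c : C, φ c * (starRingEnd ℂ) (χ c) := by
    intro x
    rw [← (MulAut.conj x).toEquiv.sum_comp]
    have h3 : ∀ g : G, (if h : x⁻¹ * (MulAut.conj x).toEquiv g * x ∈ C then
        φ ⟨x⁻¹ * (MulAut.conj x).toEquiv g * x, h⟩ else 0)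
        * (starRingEnd ℂ) (χ ((MulAut.conj x).toEquiv g))
        = (if h : g ∈ C then φ ⟨g, h⟩ else 0) * (starRingEnd ℂ) (χ g) := by
      intro g
      have e1 : (MulAut.conj x).toEquiv g = x * g * x⁻¹ := rfl
      have e2 : x⁻¹ * (x * g * x⁻¹) * x = g := by group
      rw [e1, hχ.conj]
      congr 1
      by_cases h : g ∈ C
      · rw [dif_pos h, dif_pos (by rw [e2]; exact h)]
        exact lam_congr φ _ _ e2
      · rw [dif_neg h, dif_neg (by rw [e2]; exact h)]
    simp_rw [h3]
    have h4 : ∀ c : C, φ c * (starRingEnd ℂ) (χ c) =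
        (fun g : G => (if h : g ∈ C then φ ⟨g, h⟩ else 0) * (starRingEnd ℂ) (χ g)) c := by
      intro c
      simp
    simp_rw [h4]
    rw [← Finset.sum_subtype (Finset.univ.filter (fun g => g ∈ C)) (by simp)
      (fun g : G => (if h : g ∈ C then φ ⟨g, h⟩ else 0) * (starRingEnd ℂ) (χ g)),
      Finset.sum_filter]
    refine Finset.sum_congr rfl fun g _ => ?_
    by_cases h : g ∈ C <;> simp [h]
  simp_rw [h2]
  rw [Finset.sum_const, Finset.card_univ, nsmul_eq_mul]
  field_simp

lemma decomp {M C : Type} [Group M] [Group C] [Fintype M] [Fintype C]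
    (e : G ≃* M × C) {φ : C → ℂ} (hφ : IsIrrChar C φ) {χ : G → ℂ} (hχ : IsIrrChar G χ)
    (h : ∑ c : C, φ c * (starRingEnd ℂ) (χ (e.symm (1, c))) ≠ 0) :
    ∃ ψ, IsIrrChar M ψ ∧ χ = fun g => ψ (e g).1 * φ (e g).2 := by
  let f : M → ℂ := fun m => ∑ c : C, χ (e.symm (m, c)) * (starRingEnd ℂ) (φ c)
  have hf : ∀ g x, f (x * g * x⁻¹) = f g := by
    intro m x
    refine Finset.sum_congr rfl fun c _ => ?_
    rw [← hχ.conj (e.symm (m, c)) (e.symm (x, 1)), ← map_inv, ← map_mul, ← map_mul]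
    simp
  have hf1 : f 1 ≠ 0 := by
    intro h0
    apply h
    have := congrArg (starRingEnd ℂ) h0
    simp only [f, map_sum, map_mul, Complex.conj_conj, map_zero] at this
    rw [← this]
    exact Finset.sum_congr rfl fun c _ => mul_comm _ _
  obtain ⟨ψ, hψ, hne⟩ := exists_constituent f hf hf1
  refine ⟨ψ, hψ, ?_⟩
  have ho := hχ.orth (isIrrChar_mul e hψ hφ)
  by_contra hcon
  rw [if_neg hcon] at ho
  unfold cInner at ho
  have h0 : (Fintype.card G : ℂ) ≠ 0 := by exact_mod_cast Fintype.card_ne_zero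
  have h1 := (mul_eq_zero.1 ho).resolve_left (inv_ne_zero h0)
  apply hne
  rw [← h1, ← e.symm.toEquiv.sum_comp, Fintype.sum_prod_type]
  refine Finset.sum_congr rfl fun m _ => ?_
  simp only [f, Finset.sum_mul]
  refine Finset.sum_congr rfl fun c _ => ?_
  have : e (e.symm.toEquiv (m, c)) = (m, c) := e.apply_symm_apply _
  rw [this, map_mul]
  simp only [MulEquiv.toEquiv_eq_coe, MulEquiv.coe_toEquiv]
  ring

lemma exists_prod_equiv (M C : Subgroup G) [M.Normal] [C.Normal] (hMC : M ⊓ C = ⊥)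
    (hsup : M ⊔ C = ⊤) : ∃ e : G ≃* M × C, ∀ c : C, e.symm (1, c) = c := by
  have hcomm : ∀ (m : M) (c : C), Commute (M.subtype m) (C.subtype c) := fun m c =>
    Subgroup.commute_of_normal_of_disjoint M C inferInstance inferInstance
      (disjoint_iff.2 hMC) m c m.2 c.2
  let F : M × C →* G := MonoidHom.noncommCoprod M.subtype C.subtype hcomm
  have hF : ∀ x, F x = (x.1 : G) * x.2 := fun x => rfl
  have hb : Function.Bijective F := by
    constructor
    · rw [injective_iff_map_eq_one]
      rintro ⟨m, c⟩ h
      rw [hF] at h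
      have h1 : (m : G) = (c : G)⁻¹ := eq_inv_of_mul_eq_one_left h
      have h2 : (m : G) ∈ M ⊓ C := ⟨m.2, by rw [h1]; exact C.inv_mem c.2⟩
      rw [hMC, Subgroup.mem_bot] at h2
      rw [h2, one_mul] at h
      exact Prod.ext (Subtype.ext h2) (Subtype.ext h)
    · intro g
      have : g ∈ M ⊔ C := by rw [hsup]; trivial
      rw [Subgroup.mem_sup_of_normal_right] at this
      obtain ⟨m, hm, c, hc, rfl⟩ := this
      exact ⟨(⟨m, hm⟩, ⟨c, hc⟩), rfl⟩
  refine ⟨(MulEquiv.ofBijective F hb).symm, fun c => ?_⟩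
  have : F (1, c) = c := by rw [hF]; simp
  exact this

end product

section perm
variable {G : Type} [Group G] [Fintype G]

lemma sum_stab {Y : Type} [DecidableEq Y] [MulAction G Y] (T : Finset Y) (hT : T.Nonempty)
    (h : ∀ t ∈ T, ∀ y, y ∈ T ↔ ∃ g : G, g • t = y) :
    ∑ t ∈ T, (Finset.univ.filter (fun g : G => g • t = t)).card = Fintype.card G := by
  have h1 : ∀ t ∈ T, T.card * (Finset.univ.filter (fun g : G => g • t = t)).card
      = Fintype.card G := by
    intro t ht
    have e : (T : Set Y) = MulAction.orbit G t := by
      ext y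
      simp only [Finset.mem_coe, h t ht y, MulAction.mem_orbit_iff]
    have := Nat.card_congr (MulAction.orbitProdStabilizerEquivGroup G t)
    rw [Nat.card_prod, ← e, Nat.card_eq_fintype_card (α := G)] at this
    rw [← this]
    congr 1
    · simp
    · rw [Nat.card_eq_fintype_card, Fintype.card_subtype]
      congr 1
  have h2 : T.card * ∑ t ∈ T, (Finset.univ.filter (fun g : G => g • t = t)).card
      = T.card * Fintype.card G := by
    rw [Finset.mul_sum, Finset.sum_congr rfl h1, Finset.sum_const, smul_eq_mul]
  exact Nat.eq_of_mul_eq_mul_left hT.card_pos h2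

noncomputable def permRep (G X : Type) [Group G] [MulAction G X] : Representation ℂ G (X → ℂ) where
  toFun g := LinearMap.funLeft ℂ ℂ (fun x => g⁻¹ • x)
  map_one' := by ext; simp [LinearMap.funLeft]
  map_mul' a b := by
    ext f x
    simp [LinearMap.funLeft, mul_smul]

def sumZero (X : Type) [Fintype X] : Submodule ℂ (X → ℂ) where
  carrier := {f | ∑ x, f x = 0}
  add_mem' := by
    intro a b ha hb
    simp only [Set.mem_ofPred_eq, Pi.add_apply, Finset.sum_add_distrib] at *
    rw [ha, hb, add_zero]
  zero_mem' := by simp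
  smul_mem' := by
    intro c f hf
    simp only [Set.mem_ofPred_eq, Pi.smul_apply, smul_eq_mul, ← Finset.mul_sum] at *
    rw [hf, mul_zero]

lemma permRep_mem {X : Type} [Fintype X] [MulAction G X] (g : G) (f : X → ℂ)
    (hf : f ∈ sumZero X) : permRep G X g f ∈ sumZero X := by
  change ∑ x, f (g⁻¹ • x) = 0
  exact (Equiv.sum_comp (MulAction.toPerm g⁻¹) f).trans hf

noncomputable def zeroRep (G X : Type) [Group G] [Fintype G] [Fintype X] [MulAction G X] :
    Representation ℂ G (sumZero X) where
  toFun g := (permRep G X g).restrict (permRep_mem g)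
  map_one' := by
    ext f x
    simp [LinearMap.restrict_apply]
  map_mul' a b := by
    ext f x
    simp [LinearMap.restrict_apply]

noncomputable def projZero (X : Type) [Fintype X] : (X → ℂ) →ₗ[ℂ] (X → ℂ) where
  toFun f := fun x => f x - (Fintype.card X : ℂ)⁻¹ * ∑ y, f y
  map_add' a b := by
    ext x
    simp only [Pi.add_apply, Finset.sum_add_distrib]
    ring
  map_smul' c a := by
    ext x
    simp only [Pi.smul_apply, smul_eq_mul, ← Finset.mul_sum, RingHom.id_apply]
    ring

lemma zeroRep_trace {X : Type} [Fintype X] [Nonempty X] [MulAction G X] (g : G) :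
    LinearMap.trace ℂ _ (zeroRep G X g)
      = ((Finset.univ.filter (fun x : X => g • x = x)).card : ℂ) - 1 := by
  have h0 : (Fintype.card X : ℂ) ≠ 0 := by exact_mod_cast Fintype.card_ne_zero
  have hP : ∀ f, projZero X f ∈ sumZero X := by
    intro f
    change ∑ x, (f x - (Fintype.card X : ℂ)⁻¹ * ∑ y, f y) = 0
    rw [Finset.sum_sub_distrib, Finset.sum_const, Finset.card_univ, nsmul_eq_mul]
    field_simp
    ring
  have hT : ∀ f, (permRep G X g ∘ₗ projZero X) f ∈ sumZero X := fun f =>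
    permRep_mem g _ (hP f)
  have e : zeroRep G X g = (permRep G X g ∘ₗ projZero X).restrict (fun x _ => hT x) := by
    ext f x
    have hf : ∑ x, (f : X → ℂ) x = 0 := f.2
    change (permRep G X g f) x = permRep G X g (projZero X f) x
    refine congrFun (congrArg (permRep G X g) ?_) x
    ext y
    change _ = (f : X → ℂ) y - (Fintype.card X : ℂ)⁻¹ * ∑ y, (f : X → ℂ) y
    rw [hf]; ring
  rw [e, LinearMap.trace_restrict_eq_of_forall_mem _ _ hT,
    LinearMap.trace_eq_matrix_trace ℂ (Pi.basisFun ℂ X), Matrix.trace]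
  have h1 : ∀ x, (LinearMap.toMatrix (Pi.basisFun ℂ X) (Pi.basisFun ℂ X)
      (permRep G X g ∘ₗ projZero X)).diag x = (if g • x = x then 1 else 0)
        - (Fintype.card X : ℂ)⁻¹ := by
    intro x
    rw [Matrix.diag_apply, LinearMap.toMatrix_apply]
    simp only [Pi.basisFun_apply, Pi.basisFun_repr]
    change (Pi.single x 1 : X → ℂ) (g⁻¹ • x)
      - (Fintype.card X : ℂ)⁻¹ * ∑ y, (Pi.single x 1 : X → ℂ) y = _
    rw [Finset.sum_pi_single', Pi.single_apply]
    have : (g⁻¹ • x = x) = (g • x = x) := by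
      rw [inv_smul_eq_iff]
      exact propext eq_comm
    simp only [this, Finset.mem_univ, if_true, mul_one]
  simp_rw [h1]
  rw [Finset.sum_sub_distrib, Finset.sum_const, Finset.card_univ, nsmul_eq_mul,
    mul_inv_cancel₀ h0, Finset.sum_boole]

lemma perm_irr {X : Type} [Fintype X] [Nontrivial X] [MulAction G X]
    (h2 : ∀ a b c d : X, a ≠ b → c ≠ d → ∃ g : G, g • a = c ∧ g • b = d) :
    IsIrrChar G (fun g => ((Finset.univ.filter (fun x : X => g • x = x)).card : ℂ) - 1) := by
  have hX : (FDRep.of (zeroRep G X)).character =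
      fun g => ((Finset.univ.filter (fun x : X => g • x = x)).card : ℂ) - 1 := by
    ext g
    exact zeroRep_trace g
  rw [← hX]
  apply isIrrChar_of_norm
  rw [hX]
  have h1 : ∀ a c : X, ∃ g : G, g • a = c := by
    intro a c
    obtain ⟨b, hb⟩ := exists_ne a
    obtain ⟨d, hd⟩ := exists_ne c
    obtain ⟨g, hg, _⟩ := h2 a b c d hb.symm hd.symm
    exact ⟨g, hg⟩
  obtain ⟨x₀, x₁, hx⟩ := exists_pair_ne X
  have s1 := sum_stab (G := G) (Finset.univ : Finset X) ⟨x₀, Finset.mem_univ _⟩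
    (fun t _ y => by simpa using h1 t y)
  have s2 := sum_stab (G := G) (Finset.univ : Finset X).offDiag ⟨(x₀, x₁), by simp [hx]⟩ (by
    rintro ⟨a, b⟩ hab ⟨c, d⟩
    simp only [Finset.mem_offDiag, Finset.mem_univ, true_and] at hab ⊢
    constructor
    · intro hcd
      obtain ⟨g, hg1, hg2⟩ := h2 a b c d hab hcd
      exact ⟨g, Prod.ext hg1 hg2⟩
    · rintro ⟨g, hg⟩ hcd
      apply hab
      have e1 : g • a = c := congrArg Prod.fst hg
      have e2 : g • b = d := congrArg Prod.snd hg
      rw [← e1, ← e2] at hcd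
      exact MulAction.injective g hcd)
  have s3 : ∑ p : X × X, (Finset.univ.filter (fun g : G => g • p = p)).card
      = 2 * Fintype.card G := by
    have : (Finset.univ : Finset (X × X)) = Finset.univ.diag ∪ Finset.univ.offDiag := by
      rw [Finset.diag_union_offDiag]; rfl
    rw [this, Finset.sum_union (Finset.disjoint_diag_offDiag _), s2, Finset.sum_diag]
    have : ∀ x : X, (Finset.univ.filter (fun g : G => g • (x, x) = (x, x))).card
      = (Finset.univ.filter (fun g : G => g • x = x)).card := by
      intro x
      congr 1
      ext g
      simp
    simp_rw [this]
    rw [s1]; ring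
  have t1 : ∑ g : G, (Finset.univ.filter (fun x : X => g • x = x)).card = Fintype.card G := by
    rw [← s1]
    simp only [Finset.card_filter]
    rw [Finset.sum_comm]
  have t2 : ∑ g : G, (Finset.univ.filter (fun x : X => g • x = x)).card ^ 2
      = 2 * Fintype.card G := by
    rw [← s3]
    simp only [Finset.card_filter, sq]
    rw [Finset.sum_comm]
    refine Finset.sum_congr rfl fun g _ => ?_
    rw [Finset.sum_mul_sum, Fintype.sum_prod_type]
    refine Finset.sum_congr rfl fun x _ => Finset.sum_congr rfl fun y _ => ?_
    by_cases e1 : g • x = x <;> by_cases e2 : g • y = y <;> simp [e1, e2]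
  have t1' : ∑ g : G, ((Finset.univ.filter (fun x : X => g • x = x)).card : ℂ)
      = Fintype.card G := by exact_mod_cast t1
  have t2' : ∑ g : G, ((Finset.univ.filter (fun x : X => g • x = x)).card : ℂ) ^ 2
      = 2 * Fintype.card G := by exact_mod_cast t2
  have h0 : (Fintype.card G : ℂ) ≠ 0 := by exact_mod_cast Fintype.card_ne_zero
  unfold cInner
  rw [inv_mul_eq_one₀ h0]
  have : ∀ g : G, (((Finset.univ.filter (fun x : X => g • x = x)).card : ℂ) - 1) *
      (starRingEnd ℂ) (((Finset.univ.filter (fun x : X => g • x = x)).card : ℂ) - 1)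
      = ((Finset.univ.filter (fun x : X => g • x = x)).card : ℂ) ^ 2
        - 2 * ((Finset.univ.filter (fun x : X => g • x = x)).card : ℂ) + 1 := by
    intro g
    simp only [map_sub, map_one, Complex.conj_natCast]
    ring
  simp_rw [this]
  rw [Finset.sum_add_distrib, Finset.sum_sub_distrib, ← Finset.mul_sum, t1', t2',
    Finset.sum_const, Finset.card_univ, nsmul_eq_mul]
  ring

lemma perm_irr_exists {X : Type} [Fintype X] [Nontrivial X] [MulAction G X]
    (h2 : ∀ a b c d : X, a ≠ b → c ≠ d → ∃ g : G, g • a = c ∧ g • b = d) :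
    ∃ ψ, IsIrrChar G ψ ∧ RatValued ψ ∧ ψ 1 = (Nat.card X : ℂ) - 1 := by
  refine ⟨_, perm_irr h2, fun g => ⟨((Finset.univ.filter (fun x : X => g • x = x)).card : ℚ) - 1,
    by push_cast; rfl⟩, ?_⟩
  simp

lemma A6_exists : ∃ ψ, IsIrrChar (alternatingGroup (Fin 6)) ψ ∧ RatValued ψ ∧ ψ 1 = 5 := by
  have h := alternatingGroup.isMultiplyPretransitive (Fin 6)
  have h2 : MulAction.IsMultiplyPretransitive (alternatingGroup (Fin 6)) (Fin 6) 2 :=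
    MulAction.isMultiplyPretransitive_of_le (n := Nat.card (Fin 6) - 2) (by simp) (by simp)
  rw [MulAction.is_two_pretransitive_iff] at h2
  obtain ⟨ψ, a, b, c⟩ := perm_irr_exists (G := alternatingGroup (Fin 6)) (X := Fin 6)
    (fun a b c d => h2)
  refine ⟨ψ, a, b, ?_⟩
  rw [c]
  norm_num

lemma A5_exists : ∃ ψ, IsIrrChar (alternatingGroup (Fin 5)) ψ ∧ RatValued ψ ∧ ψ 1 = 5 := by
  have : Fact (Nat.Prime 5) := ⟨by norm_num⟩
  have : Nontrivial (Fin 5) := inferInstance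
  have hc : Nat.card (alternatingGroup (Fin 5)) = 60 := by
    rw [nat_card_alternatingGroup]; simp [Nat.factorial]
  have hP : ∀ P : Sylow 5 (alternatingGroup (Fin 5)), Nat.card P = 5 := by
    intro P
    rw [P.card_eq_multiplicity, hc]
    have : (60 : ℕ).factorization 5 = 1 := by
      rw [Nat.factorization_def _ (by norm_num)]
      rw [show (60:ℕ) = 5 * 12 by norm_num, padicValNat.mul (by norm_num) (by norm_num),
        padicValNat_self, padicValNat.eq_zero_of_not_dvd (by norm_num)]
    rw [this]; norm_num
  have hX : Nat.card (Sylow 5 (alternatingGroup (Fin 5))) = 6 := by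
    let P : Sylow 5 (alternatingGroup (Fin 5)) := default
    have d1 := P.card_dvd_index
    have d2 := card_sylow_modEq_one 5 (alternatingGroup (Fin 5))
    have d3 := (P : Subgroup (alternatingGroup (Fin 5))).card_mul_index
    rw [hc] at d3
    have d4 : Nat.card (P : Subgroup (alternatingGroup (Fin 5))) = 5 := hP P
    rw [d4] at d3
    have d5 : (P : Subgroup (alternatingGroup (Fin 5))).index = 12 := by omega
    rw [d5] at d1
    have d6 := Nat.le_of_dvd (by norm_num) d1
    have d7 : Nat.card (Sylow 5 (alternatingGroup (Fin 5))) ≠ 1 := by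
      intro h1
      have hn : (P : Subgroup (alternatingGroup (Fin 5))).Normal := by
        rw [← Subgroup.normalizer_eq_top_iff, ← Subgroup.index_eq_one]
        exact P.card_eq_index_normalizer.symm.trans h1
      rcases hn.eq_bot_or_eq_top with h | h
      · rw [h] at d4; simp at d4
      · rw [h] at d5; simp at d5
    unfold Nat.ModEq at d2
    generalize Nat.card (Sylow 5 (alternatingGroup (Fin 5))) = n at *
    interval_cases n <;> simp_all
  haveI : Fintype (Sylow 5 (alternatingGroup (Fin 5))) := Fintype.ofFinite _
  have : Nontrivial (Sylow 5 (alternatingGroup (Fin 5))) := by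
    rw [← Finite.one_lt_card_iff_nontrivial, hX]; norm_num
  have key : ∀ P Q R : Sylow 5 (alternatingGroup (Fin 5)), Q ≠ P → R ≠ P →
      ∃ g : alternatingGroup (Fin 5), g • P = P ∧ g • Q = R := by
    intro P Q R hQ hR
    let PP : Subgroup (alternatingGroup (Fin 5)) := P
    have hdvd : Nat.card (MulAction.orbit PP Q) ∣ 5 := by
      have h1 := Nat.card_congr (MulAction.orbitProdStabilizerEquivGroup PP Q)
      rw [Nat.card_prod] at h1
      exact ⟨_, (hP P).symm.trans h1.symm⟩
    have hne : Nat.card (MulAction.orbit PP Q) ≠ 1 := by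
      intro h1
      have : Q ∈ MulAction.fixedPoints PP (Sylow 5 (alternatingGroup (Fin 5))) := by
        rw [MulAction.mem_fixedPoints_iff_card_orbit_eq_one, ← Nat.card_eq_fintype_card, h1]
      rw [P.isPGroup'.sylow_mem_fixedPoints_iff] at this
      apply hQ
      exact Sylow.ext (P.3 Q.2 this)
    have h5 : Nat.card (MulAction.orbit PP Q) = 5 :=
      ((Nat.dvd_prime (by norm_num)).1 hdvd).resolve_left hne
    have hPn : P ∉ MulAction.orbit PP Q := by
      rintro ⟨g, hg⟩
      apply hQ
      have e1 : g • P = P := by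
        have : (g : alternatingGroup (Fin 5)) • P = P :=
          Sylow.smul_eq_iff_mem_normalizer.2 (Subgroup.le_normalizer g.2)
        exact this
      exact MulAction.injective g (hg.trans e1.symm)
    have hs : MulAction.orbit PP Q = {P}ᶜ := by
      apply Set.eq_of_subset_of_ncard_le
      · intro x hx hx2
        rw [Set.mem_singleton_iff] at hx2
        exact hPn (hx2 ▸ hx)
      · rw [Set.ncard_compl, Set.ncard_singleton, hX, ← Nat.card_coe_set_eq, h5]
      · exact Set.toFinite _
    have : R ∈ MulAction.orbit PP Q := by rw [hs]; exact hR
    obtain ⟨g, hg⟩ := this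
    refine ⟨g, Sylow.smul_eq_iff_mem_normalizer.2 (Subgroup.le_normalizer g.2), hg⟩
  obtain ⟨ψ, a, b, c⟩ := perm_irr_exists (G := alternatingGroup (Fin 5))
    (X := Sylow 5 (alternatingGroup (Fin 5))) (by
      intro a b c d hab hcd
      obtain ⟨g, hg⟩ := MulAction.exists_smul_eq (alternatingGroup (Fin 5)) a c
      have h3 : g • b ≠ c := by
        rw [← hg]
        exact fun h => hab (MulAction.injective g h).symm
      obtain ⟨k, hk1, hk2⟩ := key c (g • b) d h3 hcd.symm
      refine ⟨k * g, ?_, ?_⟩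
      · rw [mul_smul, hg, hk1]
      · rw [mul_smul, hk2])
  refine ⟨ψ, a, b, ?_⟩
  rw [c, hX]
  norm_num
end perm

section alt
open Equiv

lemma rat_data {G : Type} [Group G] [Fintype G] {ψ : G → ℂ} (h : IsIrrChar G ψ)
    (hr : RatValued ψ) (h1 : ψ ≠ fun _ => 1) :
    ∃ (n : ℕ) (q : G → ℚ), 0 < n ∧ ψ 1 = n ∧ (∀ g, ψ g = q g) ∧ q 1 = n ∧
      ∑ g, q g = 0 ∧ ∑ g, q g ^ 2 = Fintype.card G ∧
      (∀ (p : ℕ) (g : G), p.Prime → g ^ p = 1 → ∃ a b : ℕ, n = a + (p - 1) * b ∧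
        q g = (a : ℚ) - b) ∧ ∀ g x, q (x * g * x⁻¹) = q g := by
  obtain ⟨n, hn, hn1, hp⟩ := h.deg
  choose q hq using hr
  have h0 : (Fintype.card G : ℂ) ≠ 0 := by exact_mod_cast Fintype.card_ne_zero
  refine ⟨n, q, hn, hn1, hq, ?_, ?_, ?_, ?_, ?_⟩
  · have := hq 1
    rw [hn1] at this
    exact_mod_cast this.symm
  · have o := h.orth (isIrrChar_one (G := G))
    rw [if_neg h1] at o
    unfold cInner at o
    have := (mul_eq_zero.1 o).resolve_left (inv_ne_zero h0)
    simp only [hq, map_one, mul_one] at this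
    exact_mod_cast this
  · have o := h.orth h
    rw [if_pos rfl] at o
    unfold cInner at o
    rw [inv_mul_eq_one₀ h0] at o
    have e : ∀ g, ψ g * (starRingEnd ℂ) (ψ g) = (q g : ℂ) ^ 2 := by
      intro g
      rw [hq]
      have : (starRingEnd ℂ) (q g : ℂ) = q g := map_ratCast _ _
      rw [this]; ring
    simp only [e] at o
    exact_mod_cast o.symm
  · intro p g hpp hg
    obtain ⟨a, b, hab, hv⟩ := hp p g hpp hg (fun g => ⟨q g, hq g⟩)
    refine ⟨a, b, hab, ?_⟩
    rw [hq] at hv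
    exact_mod_cast hv
  · intro g x
    have := h.conj g x
    rw [hq, hq] at this
    exact_mod_cast this

/-- Even permutations of a given cycle type. -/
def Tm (k : ℕ) (m : Multiset ℕ) : Finset (alternatingGroup (Fin k)) :=
  Finset.univ.filter (fun g => (g : Perm (Fin k)).cycleType = m)

lemma mem_Tm {k : ℕ} {m : Multiset ℕ} {g : alternatingGroup (Fin k)} :
    g ∈ Tm k m ↔ (g : Perm (Fin k)).cycleType = m := by
  simp [Tm]

lemma card_alt5 : Fintype.card (alternatingGroup (Fin 5)) = 60 := by
  rw [← Nat.card_eq_fintype_card, nat_card_alternatingGroup]; simp [Nat.factorial]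

lemma card_alt6 : Fintype.card (alternatingGroup (Fin 6)) = 360 := by
  rw [← Nat.card_eq_fintype_card, nat_card_alternatingGroup]; simp [Nat.factorial]

lemma card_Tm (k : ℕ) (m : Multiset ℕ) : (Tm k m).card =
    if (m.sum ≤ k ∧ ∀ a ∈ m, 2 ≤ a) ∧ Even (m.sum + Multiset.card m) then
        (k).factorial /
          ((k - m.sum).factorial *
            (m.prod * (∏ n ∈ m.toFinset, (m.count n).factorial)))
      else 0 := by
  have := AlternatingGroup.card_of_cycleType (Fin k) m
  rw [Fintype.card_fin] at this
  rw [← this]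
  unfold Tm
  congr 1

lemma c5_0 : (Tm 5 0).card = 1 := by rw [card_Tm]; decide
lemma c5_2 : (Tm 5 {2, 2}).card = 15 := by rw [card_Tm]; decide
lemma c5_3 : (Tm 5 {3}).card = 20 := by rw [card_Tm]; decide
lemma c5_5 : (Tm 5 {5}).card = 24 := by rw [card_Tm]; decide
lemma c6_0 : (Tm 6 0).card = 1 := by rw [card_Tm]; decide
lemma c6_2 : (Tm 6 {2, 2}).card = 45 := by rw [card_Tm]; decide
lemma c6_3 : (Tm 6 {3}).card = 40 := by rw [card_Tm]; decide
lemma c6_33 : (Tm 6 {3, 3}).card = 40 := by rw [card_Tm]; decide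
lemma c6_4 : (Tm 6 {4, 2}).card = 90 := by rw [card_Tm]; decide
lemma c6_5 : (Tm 6 {5}).card = 144 := by rw [card_Tm]; decide

lemma Tm_zero (k : ℕ) : Tm k 0 = {1} := by
  ext g
  rw [mem_Tm, Perm.cycleType_eq_zero, Finset.mem_singleton]
  exact OneMemClass.coe_eq_one

lemma Tm_pow {k : ℕ} {m : Multiset ℕ} {g : alternatingGroup (Fin k)} (hg : g ∈ Tm k m) (p : ℕ)
    (hm : m.lcm = p) : g ^ p = 1 := by
  rw [mem_Tm] at hg
  have := Perm.lcm_cycleType (g : Perm (Fin k))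
  rw [hg, hm] at this
  apply Subtype.ext
  have h2 := pow_orderOf_eq_one (g : Perm (Fin k))
  rw [← this] at h2
  exact h2

lemma Tm_conj {k : ℕ} {m : Multiset ℕ} {g h : alternatingGroup (Fin k)} (hg : g ∈ Tm k m)
    (hh : h ∈ Tm k m) (hm : ¬ ((∀ c ∈ m, Odd c) ∧ k ≤ m.sum + 1 ∧ ∀ i, m.count i ≤ 1)) :
    ∃ x, x * g * x⁻¹ = h := by
  rw [mem_Tm] at hg hh
  have hc : IsConj (g : Perm (Fin k)) h := by
    rw [Perm.isConj_iff_cycleType_eq, hg, hh]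
  obtain ⟨c, hc⟩ := isConj_iff.1 hc
  have h2 := (Perm.centralizer_le_alternating_iff (g := (g : Perm (Fin k)))).not
  rw [hg, Fintype.card_fin] at h2
  have h3 := h2.2 hm
  rw [SetLike.not_le_iff_exists] at h3
  obtain ⟨z, hz, hz2⟩ := h3
  rw [Subgroup.mem_centralizer_singleton_iff] at hz
  rw [Perm.mem_alternatingGroup] at hz2
  rcases Int.units_eq_one_or (Perm.sign c) with h | h
  · exact ⟨⟨c, Perm.mem_alternatingGroup.2 h⟩, Subtype.ext hc⟩
  · have hz3 := (Int.units_eq_one_or (Perm.sign z)).resolve_left hz2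
    refine ⟨⟨c * z, Perm.mem_alternatingGroup.2 (by rw [Perm.sign_mul, h, hz3]; decide)⟩,
      Subtype.ext ?_⟩
    change c * z * g * (c * z)⁻¹ = _
    rw [← hc, mul_assoc c z, hz]
    group

lemma sum_types {k : ℕ} (L : Finset (Multiset ℕ))
    (hL : ∑ m ∈ L, (Tm k m).card = Fintype.card (alternatingGroup (Fin k)))
    (F : alternatingGroup (Fin k) → ℚ) : ∑ g, F g = ∑ m ∈ L, ∑ g ∈ Tm k m, F g := by
  have h1 : (L.biUnion (Tm k)) = Finset.univ := by
    rw [← Finset.card_eq_iff_eq_univ, ← hL, Finset.card_biUnion]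
    intro x _ y _ hxy
    rw [Function.onFun, Finset.disjoint_left]
    intro g hg1 hg2
    rw [mem_Tm] at hg1 hg2
    exact hxy (hg1.symm.trans hg2)
  rw [← h1, Finset.sum_biUnion]
  intro x _ y _ hxy
  rw [Function.onFun, Finset.disjoint_left]
  intro g hg1 hg2
  rw [mem_Tm] at hg1 hg2
  exact hxy (hg1.symm.trans hg2)

lemma sum5 (F : alternatingGroup (Fin 5) → ℚ) : ∑ g, F g =
    F 1 + ∑ g ∈ Tm 5 {2, 2}, F g + ∑ g ∈ Tm 5 {3}, F g + ∑ g ∈ Tm 5 {5}, F g := by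
  have e : ∀ f : Multiset ℕ → ℚ, ∑ m ∈ ({0, {2, 2}, {3}, {5}} : Finset (Multiset ℕ)), f m
      = f 0 + f {2, 2} + f {3} + f {5} := by
    intro f
    rw [Finset.sum_insert (by decide), Finset.sum_insert (by decide),
      Finset.sum_insert (by decide), Finset.sum_singleton]
    ring
  rw [sum_types ({0, {2, 2}, {3}, {5}} : Finset (Multiset ℕ)), e, Tm_zero, Finset.sum_singleton]
  have := e (fun m => ((Tm 5 m).card : ℚ))
  simp only [c5_0, c5_2, c5_3, c5_5] at this
  rw [card_alt5]
  norm_num at this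
  exact_mod_cast this

lemma sum6 (F : alternatingGroup (Fin 6) → ℚ) : ∑ g, F g =
    F 1 + ∑ g ∈ Tm 6 {2, 2}, F g + ∑ g ∈ Tm 6 {3}, F g + ∑ g ∈ Tm 6 {3, 3}, F g
      + ∑ g ∈ Tm 6 {4, 2}, F g + ∑ g ∈ Tm 6 {5}, F g := by
  have e : ∀ f : Multiset ℕ → ℚ,
      ∑ m ∈ ({0, {2, 2}, {3}, {3, 3}, {4, 2}, {5}} : Finset (Multiset ℕ)), f m
      = f 0 + f {2, 2} + f {3} + f {3, 3} + f {4, 2} + f {5} := by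
    intro f
    rw [Finset.sum_insert (by decide), Finset.sum_insert (by decide),
      Finset.sum_insert (by decide), Finset.sum_insert (by decide),
      Finset.sum_insert (by decide), Finset.sum_singleton]
    ring
  rw [sum_types ({0, {2, 2}, {3}, {3, 3}, {4, 2}, {5}} : Finset (Multiset ℕ)), e, Tm_zero,
    Finset.sum_singleton]
  rw [card_alt6, Finset.sum_insert (by decide), Finset.sum_insert (by decide),
    Finset.sum_insert (by decide), Finset.sum_insert (by decide),
    Finset.sum_insert (by decide), Finset.sum_singleton, c6_0, c6_2, c6_3, c6_33, c6_4, c6_5]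
  norm_num

end alt

section facts
open Equiv

lemma sum_eq_const {A : Type} (T : Finset A) (f : A → ℚ) (c : ℚ) (h : ∀ g ∈ T, f g = c) :
    ∑ g ∈ T, f g = T.card * c := by
  rw [Finset.sum_congr rfl h, Finset.sum_const, nsmul_eq_mul]

/-- On a set of elements of order dividing `p`, a degree below `p - 1` forces constant values. -/
lemma const_small {A : Type} (T : Finset A) (q : A → ℚ) (n p : ℕ) (hnp : n < p - 1)
    (h : ∀ g ∈ T, ∃ a b : ℕ, n = a + (p - 1) * b ∧ q g = (a : ℚ) - b) :
    ∀ g ∈ T, q g = n := by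
  intro g hg
  obtain ⟨a, b, h1, h2⟩ := h g hg
  have hb : b = 0 := by
    by_contra hb
    have : (p - 1) * 1 ≤ (p - 1) * b := Nat.mul_le_mul_left _ (Nat.pos_of_ne_zero hb)
    omega
  subst hb
  simp at h1 h2
  rw [h2, h1]

lemma four_five {A : Type} (T : Finset A) (q : A → ℚ)
    (h : ∀ g ∈ T, ∃ a b : ℕ, 4 = a + (5 - 1) * b ∧ q g = (a : ℚ) - b) :
    ∀ g ∈ T, q g = -1 ∨ q g = 4 := by
  intro g hg
  obtain ⟨a, b, h1, h2⟩ := h g hg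
  have : (a = 0 ∧ b = 1) ∨ (a = 4 ∧ b = 0) := by omega
  rcases this with ⟨rfl, rfl⟩ | ⟨rfl, rfl⟩
  · left; rw [h2]; norm_num
  · right; rw [h2]; norm_num

lemma four_three {A : Type} (T : Finset A) (q : A → ℚ)
    (h : ∀ g ∈ T, ∃ a b : ℕ, 4 = a + (3 - 1) * b ∧ q g = (a : ℚ) - b) :
    ∀ g ∈ T, q g = 1 ∨ q g = -2 ∨ q g = 4 := by
  intro g hg
  obtain ⟨a, b, h1, h2⟩ := h g hg
  have : (a = 2 ∧ b = 1) ∨ (a = 0 ∧ b = 2) ∨ (a = 4 ∧ b = 0) := by omega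
  rcases this with ⟨rfl, rfl⟩ | ⟨rfl, rfl⟩ | ⟨rfl, rfl⟩
  · left; rw [h2]; norm_num
  · right; left; rw [h2]; norm_num
  · right; right; rw [h2]; norm_num

lemma four_two {A : Type} (T : Finset A) (q : A → ℚ)
    (h : ∀ g ∈ T, ∃ a b : ℕ, 4 = a + (2 - 1) * b ∧ q g = (a : ℚ) - b) :
    ∀ g ∈ T, q g = 0 ∨ 4 ≤ q g ^ 2 := by
  intro g hg
  obtain ⟨a, b, h1, h2⟩ := h g hg
  have hb : b ≤ 4 := by omega
  obtain rfl : a = 4 - b := by omega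
  interval_cases b
  · right; rw [h2]; norm_num
  · right; rw [h2]; norm_num
  · left; rw [h2]; norm_num
  · right; rw [h2]; norm_num
  · right; rw [h2]; norm_num

lemma A5_deg {ψ : alternatingGroup (Fin 5) → ℂ} (h : IsIrrChar _ ψ) (hr : RatValued ψ)
    (h1 : ψ ≠ fun _ => 1) : ∃ n : ℕ, 4 ≤ n ∧ ψ 1 = n := by
  obtain ⟨n, q, hn, hn1, hq, hq1, s1, s2, hp, hc⟩ := rat_data h hr h1
  refine ⟨n, ?_, hn1⟩
  by_contra hlt
  push Not at hlt
  rw [card_alt5, sum5] at s2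
  rw [sum5] at s1
  have v5 := const_small (Tm 5 {5}) q n 5 (by omega)
    (fun g hg => hp 5 g (by norm_num) (Tm_pow hg 5 (by decide)))
  rw [sum_eq_const _ _ _ v5, c5_5] at s1
  rw [sum_eq_const (Tm 5 {5}) (fun g => q g ^ 2) ((n : ℚ) ^ 2) (fun g hg => by rw [v5 g hg]),
    c5_5] at s2
  rw [hq1] at s1 s2
  have p1 : 0 ≤ ∑ g ∈ Tm 5 {2, 2}, q g ^ 2 := Finset.sum_nonneg fun g _ => sq_nonneg _
  have p2 : 0 ≤ ∑ g ∈ Tm 5 {3}, q g ^ 2 := Finset.sum_nonneg fun g _ => sq_nonneg _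
  have hn' : n = 1 := by
    by_contra hne
    have h2 : (2 : ℚ) ≤ n := by exact_mod_cast (show 2 ≤ n by omega)
    push_cast at s2
    nlinarith
  subst hn'
  have v3 := const_small (Tm 5 {3}) q 1 3 (by omega)
    (fun g hg => hp 3 g (by norm_num) (Tm_pow hg 3 (by decide)))
  rw [sum_eq_const _ _ _ v3, c5_3] at s1
  rw [sum_eq_const (Tm 5 {3}) (fun g => q g ^ 2) (((1 : ℕ) : ℚ) ^ 2)
    (fun g hg => by rw [v3 g hg]), c5_3] at s2
  have p3 : 0 ≤ ∑ g ∈ Tm 5 {2, 2}, (q g + 1) ^ 2 := Finset.sum_nonneg fun g _ => sq_nonneg _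
  have e : ∀ g, (q g + 1) ^ 2 = q g ^ 2 + 2 * q g + 1 := fun g => by ring
  simp_rw [e] at p3
  rw [Finset.sum_add_distrib, Finset.sum_add_distrib, ← Finset.mul_sum, Finset.sum_const,
    c5_2] at p3
  rw [nsmul_eq_mul, mul_one] at p3
  push_cast at s1 s2 p3
  linarith

lemma A5_four_vals {ψ : alternatingGroup (Fin 5) → ℂ} (h : IsIrrChar _ ψ) (hr : RatValued ψ)
    (h4 : ψ 1 = 4) : ∃ q : alternatingGroup (Fin 5) → ℚ, (∀ g, ψ g = q g) ∧ q 1 = 4 ∧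
      (∀ g ∈ Tm 5 {2, 2}, q g = 0) ∧ (∀ g ∈ Tm 5 {3}, q g = 1) ∧ ∀ g ∈ Tm 5 {5}, q g = -1 := by
  have h1 : ψ ≠ fun _ => 1 := by
    rintro rfl
    norm_num at h4
  obtain ⟨n, q, hn, hn1, hq, hq1, s1, s2, hp, hc⟩ := rat_data h hr h1
  have hn4 : n = 4 := by
    rw [h4] at hn1
    exact_mod_cast hn1.symm
  subst hn4
  rw [card_alt5, sum5, hq1] at s2
  have v5 := four_five (Tm 5 {5}) q
    (fun g hg => hp 5 g (by norm_num) (Tm_pow hg 5 (by decide)))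
  have v3 := four_three (Tm 5 {3}) q
    (fun g hg => hp 3 g (by norm_num) (Tm_pow hg 3 (by decide)))
  have n5 : ∀ g ∈ Tm 5 {5}, 0 ≤ q g ^ 2 - 1 := by
    intro g hg
    rcases v5 g hg with h | h <;> rw [h] <;> norm_num
  have n3 : ∀ g ∈ Tm 5 {3}, 0 ≤ q g ^ 2 - 1 := by
    intro g hg
    rcases v3 g hg with h | h | h <;> rw [h] <;> norm_num
  have n2 : ∀ g ∈ Tm 5 {2, 2}, 0 ≤ q g ^ 2 := fun g _ => sq_nonneg _
  have t5 := Finset.sum_nonneg n5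
  have t3 := Finset.sum_nonneg n3
  have t2 := Finset.sum_nonneg n2
  have e5 := Finset.sum_eq_zero_iff_of_nonneg n5
  have e3 := Finset.sum_eq_zero_iff_of_nonneg n3
  have e2 := Finset.sum_eq_zero_iff_of_nonneg n2
  rw [Finset.sum_sub_distrib, Finset.sum_const, c5_5] at t5 e5
  rw [Finset.sum_sub_distrib, Finset.sum_const, c5_3] at t3 e3
  rw [nsmul_eq_mul, mul_one] at t5 e5 t3 e3
  push_cast at t5 t3 s2 e5 e3
  refine ⟨q, hq, by rw [hq1]; norm_num, ?_, ?_, ?_⟩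
  · intro g hg
    have := e2.1 (by linarith) g hg
    exact pow_eq_zero_iff (two_ne_zero) |>.1 this
  · intro g hg
    rcases v3 g hg with h | h | h
    · exact h
    · have := e3.1 (by linarith) g hg
      rw [h] at this; norm_num at this
    · have := e3.1 (by linarith) g hg
      rw [h] at this; norm_num at this
  · intro g hg
    rcases v5 g hg with h | h
    · exact h
    · have := e5.1 (by linarith) g hg
      rw [h] at this; norm_num at this

lemma A5_four {ψ ψ' : alternatingGroup (Fin 5) → ℂ} (h : IsIrrChar _ ψ) (hr : RatValued ψ)
    (h4 : ψ 1 = 4) (h' : IsIrrChar _ ψ') (hr' : RatValued ψ') (h4' : ψ' 1 = 4) : ψ = ψ' := by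
  obtain ⟨q, hq, a1, a2, a3, a5⟩ := A5_four_vals h hr h4
  obtain ⟨q', hq', b1, b2, b3, b5⟩ := A5_four_vals h' hr' h4'
  have s : ∑ g, (q g - q' g) ^ 2 = 0 := by
    rw [sum5, a1, b1, Finset.sum_eq_zero, Finset.sum_eq_zero, Finset.sum_eq_zero]
    · norm_num
    · intro g hg; rw [a5 g hg, b5 g hg]; norm_num
    · intro g hg; rw [a3 g hg, b3 g hg]; norm_num
    · intro g hg; rw [a2 g hg, b2 g hg]; norm_num
  rw [Finset.sum_eq_zero_iff_of_nonneg (fun g _ => sq_nonneg _)] at s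
  ext g
  have := s g (Finset.mem_univ _)
  rw [pow_eq_zero_iff two_ne_zero, sub_eq_zero] at this
  rw [hq, hq', this]

lemma A6_deg {ψ : alternatingGroup (Fin 6) → ℂ} (h : IsIrrChar _ ψ) (hr : RatValued ψ)
    (h1 : ψ ≠ fun _ => 1) : ∃ n : ℕ, 5 ≤ n ∧ ψ 1 = n := by
  obtain ⟨n, q, hn, hn1, hq, hq1, s1, s2, hp, hc⟩ := rat_data h hr h1
  refine ⟨n, ?_, hn1⟩
  by_contra hlt
  push Not at hlt
  rw [card_alt6, sum6] at s2
  rw [sum6] at s1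
  rw [hq1] at s1 s2
  have p2 : 0 ≤ ∑ g ∈ Tm 6 {2, 2}, q g ^ 2 := Finset.sum_nonneg fun g _ => sq_nonneg _
  have p3 : 0 ≤ ∑ g ∈ Tm 6 {3}, q g ^ 2 := Finset.sum_nonneg fun g _ => sq_nonneg _
  have p33 : 0 ≤ ∑ g ∈ Tm 6 {3, 3}, q g ^ 2 := Finset.sum_nonneg fun g _ => sq_nonneg _
  have p4 : 0 ≤ ∑ g ∈ Tm 6 {4, 2}, q g ^ 2 := Finset.sum_nonneg fun g _ => sq_nonneg _
  by_cases h4 : n = 4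
  · subst h4
    have v5 := four_five (Tm 6 {5}) q
      (fun g hg => hp 5 g (by norm_num) (Tm_pow hg 5 (by decide)))
    have v3 := four_three (Tm 6 {3}) q
      (fun g hg => hp 3 g (by norm_num) (Tm_pow hg 3 (by decide)))
    have v33 := four_three (Tm 6 {3, 3}) q
      (fun g hg => hp 3 g (by norm_num) (Tm_pow hg 3 (by decide)))
    have v2 := four_two (Tm 6 {2, 2}) q
      (fun g hg => hp 2 g (by norm_num) (Tm_pow hg 2 (by decide)))
    have cst : ∀ m : Multiset ℕ, ¬ ((∀ c ∈ m, Odd c) ∧ 6 ≤ m.sum + 1 ∧ ∀ i, m.count i ≤ 1) →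
        ∀ r ∈ Tm 6 m, ∀ g ∈ Tm 6 m, q g = q r := by
      intro m hm r hr g hg
      obtain ⟨x, hx⟩ := Tm_conj hr hg hm
      rw [← hx, hc]
    obtain ⟨r2, hr2⟩ : (Tm 6 {2, 2}).Nonempty := by rw [← Finset.card_pos, c6_2]; norm_num
    obtain ⟨r3, hr3⟩ : (Tm 6 {3}).Nonempty := by rw [← Finset.card_pos, c6_3]; norm_num
    obtain ⟨r33, hr33⟩ : (Tm 6 {3, 3}).Nonempty := by rw [← Finset.card_pos, c6_33]; norm_num
    obtain ⟨r4, hr4⟩ : (Tm 6 {4, 2}).Nonempty := by rw [← Finset.card_pos, c6_4]; norm_num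
    have k2 := cst {2, 2} (by
      intro hh; have := hh.1 2 (by simp); revert this; decide) r2 hr2
    have k3 := cst {3} (by
      intro hh; have := hh.2.1; revert this; decide) r3 hr3
    have k33 := cst {3, 3} (by
      intro hh; have := hh.2.2 3; revert this; decide) r33 hr33
    have k4 := cst {4, 2} (by
      intro hh; have := hh.1 2 (by simp); revert this; decide) r4 hr4
    rw [sum_eq_const _ _ _ k2, sum_eq_const _ _ _ k3, sum_eq_const _ _ _ k33,
      sum_eq_const _ _ _ k4, c6_2, c6_3, c6_33, c6_4] at s1
    rw [sum_eq_const _ (fun g => q g ^ 2) (q r2 ^ 2) (fun g hg => by rw [k2 g hg]),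
      sum_eq_const _ (fun g => q g ^ 2) (q r3 ^ 2) (fun g hg => by rw [k3 g hg]),
      sum_eq_const _ (fun g => q g ^ 2) (q r33 ^ 2) (fun g hg => by rw [k33 g hg]),
      sum_eq_const _ (fun g => q g ^ 2) (q r4 ^ 2) (fun g hg => by rw [k4 g hg]),
      c6_2, c6_3, c6_33, c6_4] at s2
    have u2 := v2 r2 hr2
    have u3 := v3 r3 hr3
    have u33 := v33 r33 hr33
    -- the elements of order five
    obtain ⟨N, hN⟩ : ∃ N : ℕ, N = ((Tm 6 {5}).filter (fun g => q g = 4)).card := ⟨_, rfl⟩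
    have w1 : ∑ g ∈ Tm 6 {5}, q g = -144 + 5 * N := by
      have : ∀ g ∈ Tm 6 {5}, q g = -1 + 5 * (if q g = 4 then 1 else 0) := by
        intro g hg
        rcases v5 g hg with h | h <;> rw [h] <;> norm_num
      rw [Finset.sum_congr rfl this, Finset.sum_add_distrib, ← Finset.mul_sum, Finset.sum_boole,
        Finset.sum_const, c6_5, ← hN]
      norm_num
    have w2 : ∑ g ∈ Tm 6 {5}, q g ^ 2 = 144 + 15 * N := by
      have : ∀ g ∈ Tm 6 {5}, q g ^ 2 = 1 + 15 * (if q g = 4 then 1 else 0) := by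
        intro g hg
        rcases v5 g hg with h | h <;> rw [h] <;> norm_num
      rw [Finset.sum_congr rfl this, Finset.sum_add_distrib, ← Finset.mul_sum, Finset.sum_boole,
        Finset.sum_const, c6_5, ← hN]
      norm_num
    rw [w1] at s1
    rw [w2] at s2
    clear w1 w2 hN v5 v3 v33 v2 k2 k3 k33 k4 cst hp hc p2 p3 p33 p4
    generalize q r2 = u at *
    generalize q r3 = x at *
    generalize q r33 = y at *
    generalize q r4 = v at *
    push_cast at s1 s2
    have hN0 : (0 : ℚ) ≤ N := Nat.cast_nonneg N
    have x1 : 1 ≤ x ^ 2 := by rcases u3 with h | h | h <;> rw [h] <;> norm_num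
    have y1 : 1 ≤ y ^ 2 := by rcases u33 with h | h | h <;> rw [h] <;> norm_num
    have hu : u = 0 := by
      rcases u2 with h | h
      · exact h
      · exfalso; nlinarith [sq_nonneg v]
    subst hu
    have hx : x = 1 ∨ x = -2 := by
      rcases u3 with h | h | h
      · exact Or.inl h
      · exact Or.inr h
      · exfalso; subst h; nlinarith [sq_nonneg v]
    have hy : y = 1 ∨ y = -2 := by
      rcases u33 with h | h | h
      · exact Or.inl h
      · exact Or.inr h
      · exfalso; subst h; nlinarith [sq_nonneg v]
    have bad : ∀ N' : ℚ, 0 ≤ N' → 15 * N' + 90 * v ^ 2 = 0 → 5 * N' + 90 * v = 180 → False := by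
      intro N' h0 e1 e2
      have hv : v = 0 := by
        have : v ^ 2 = 0 := by nlinarith [sq_nonneg v]
        exact pow_eq_zero_iff two_ne_zero |>.1 this
      subst hv
      nlinarith
    rcases hx with rfl | rfl <;> rcases hy with rfl | rfl
    · have hN8 : N ≤ 8 := by
        have : (N : ℚ) ≤ 8 := by nlinarith [sq_nonneg v]
        exact_mod_cast this
      have hv : v = (12 - N) / 18 := by linarith
      subst hv
      interval_cases N <;> norm_num at s2
    · exact bad N hN0 (by linarith) (by linarith)
    · exact bad N hN0 (by linarith) (by linarith)
    · nlinarith [sq_nonneg v]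
  have v5 := const_small (Tm 6 {5}) q n 5 (by omega)
    (fun g hg => hp 5 g (by norm_num) (Tm_pow hg 5 (by decide)))
  rw [sum_eq_const _ _ _ v5, c6_5] at s1
  rw [sum_eq_const (Tm 6 {5}) (fun g => q g ^ 2) ((n : ℚ) ^ 2) (fun g hg => by rw [v5 g hg]),
    c6_5] at s2
  have hn' : n = 1 := by
    by_contra hne
    have h2 : (2 : ℚ) ≤ n := by exact_mod_cast (show 2 ≤ n by omega)
    push_cast at s2
    nlinarith
  subst hn'
  have v3 := const_small (Tm 6 {3}) q 1 3 (by omega)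
    (fun g hg => hp 3 g (by norm_num) (Tm_pow hg 3 (by decide)))
  have v33 := const_small (Tm 6 {3, 3}) q 1 3 (by omega)
    (fun g hg => hp 3 g (by norm_num) (Tm_pow hg 3 (by decide)))
  rw [sum_eq_const _ _ _ v3, c6_3, sum_eq_const _ _ _ v33, c6_33] at s1
  rw [sum_eq_const (Tm 6 {3}) (fun g => q g ^ 2) (((1 : ℕ) : ℚ) ^ 2)
    (fun g hg => by rw [v3 g hg]),
    sum_eq_const (Tm 6 {3, 3}) (fun g => q g ^ 2) (((1 : ℕ) : ℚ) ^ 2)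
    (fun g hg => by rw [v33 g hg]),
    c6_3, c6_33] at s2
  have e : ∀ g, (q g + 1) ^ 2 = q g ^ 2 + 2 * q g + 1 := fun g => by ring
  have z2 : 0 ≤ ∑ g ∈ Tm 6 {2, 2}, (q g + 1) ^ 2 := Finset.sum_nonneg fun g _ => sq_nonneg _
  have z4 : 0 ≤ ∑ g ∈ Tm 6 {4, 2}, (q g + 1) ^ 2 := Finset.sum_nonneg fun g _ => sq_nonneg _
  simp_rw [e] at z2 z4
  rw [Finset.sum_add_distrib, Finset.sum_add_distrib, ← Finset.mul_sum, Finset.sum_const,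
    c6_2] at z2
  rw [Finset.sum_add_distrib, Finset.sum_add_distrib, ← Finset.mul_sum, Finset.sum_const,
    c6_4] at z4
  rw [nsmul_eq_mul, mul_one] at z2 z4
  push_cast at s1 s2 z2 z4
  linarith

end facts

section assembly

lemma avg_abs {α : Type} (S : Finset α) (f : α → ℝ) (B L : ℝ) (hLB : L ≤ B)
    (hL : ∀ x ∈ S, L ≤ f x) (hu : ∀ x ∈ S, ∀ y ∈ S, f x < B → f y < B → x = y)
    (hex : ∃ y ∈ S, B ≤ f y) : (B + L) / 2 ≤ (∑ x ∈ S, f x) / S.card := by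
  obtain ⟨y, hy, hyB⟩ := hex
  have hc : (0 : ℝ) < S.card := by exact_mod_cast Finset.card_pos.2 ⟨y, hy⟩
  rw [le_div_iff₀ hc]
  by_cases h : ∃ x ∈ S, f x < B
  · obtain ⟨x, hx, hxB⟩ := h
    have hyx : y ∈ S.erase x := by
      refine Finset.mem_erase.2 ⟨?_, hy⟩
      rintro rfl
      linarith
    have h1 : (1 : ℝ) ≤ (S.erase x).card := by exact_mod_cast Finset.card_pos.2 ⟨y, hyx⟩
    have h2 : ((S.erase x).card : ℝ) + 1 = S.card := by
      exact_mod_cast Finset.card_erase_add_one hx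
    have h3 : (S.erase x).card • B ≤ ∑ z ∈ S.erase x, f z := by
      apply Finset.card_nsmul_le_sum
      intro z hz
      obtain ⟨hz1, hz2⟩ := Finset.mem_erase.1 hz
      by_contra hlt
      push Not at hlt
      exact hz1 (hu z hz2 x hx hlt hxB)
    rw [nsmul_eq_mul] at h3
    rw [← Finset.add_sum_erase S f hx, ← h2]
    have := hL x hx
    nlinarith
  · push Not at h
    have h3 : S.card • B ≤ ∑ z ∈ S, f z := Finset.card_nsmul_le_sum _ _ _ h
    rw [nsmul_eq_mul] at h3
    nlinarith

variable {G : Type} [Group G] [Fintype G] {M C : Subgroup G}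

/-- Description of the set of constituents. -/
lemma S_desc (e : G ≃* M × C) (he : ∀ c : C, e.symm (1, c) = c) {φ : C → ℂ}
    (hφ : IsIrrChar C φ) {S : Finset (G → ℂ)}
    (hS : ∀ χ : G → ℂ, χ ∈ S ↔
      (IsConstituent (_root_.Ind C φ) χ ∧ RatValued χ ∧ 1 < (χ 1).re))
    (hne : S.Nonempty) :
    (∀ χ ∈ S, ∃ ψ, IsIrrChar M ψ ∧ RatValued ψ ∧ χ = fun g => ψ (e g).1 * φ (e g).2) ∧
    (∀ ψ, IsIrrChar M ψ → RatValued ψ → 1 < (ψ 1 * φ 1).re →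
      (fun g => ψ (e g).1 * φ (e g).2) ∈ S) := by
  obtain ⟨d, hd, hd1, -⟩ := hφ.deg
  have hd0 : (d : ℂ) ≠ 0 := by exact_mod_cast hd.ne'
  have hcC : (Nat.card C : ℂ) ≠ 0 := by exact_mod_cast Nat.card_pos.ne'
  have key : ∀ χ ∈ S, ∃ ψ, IsIrrChar M ψ ∧ RatValued ψ ∧ RatValued φ ∧
      χ = fun g => ψ (e g).1 * φ (e g).2 := by
    intro χ hχ
    obtain ⟨⟨h1, h2⟩, h3, h4⟩ := (hS χ).1 hχ
    rw [frob_recip C φ h1] at h2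
    have h5 : ∑ c, φ c * (starRingEnd ℂ) (χ (e.symm (1, c))) ≠ 0 := by
      simp_rw [he]
      exact right_ne_zero_of_mul h2
    obtain ⟨ψ, hψ, hχe⟩ := decomp e hφ h1 h5
    obtain ⟨n, hn, hn1, -⟩ := hψ.deg
    have hn0 : (n : ℂ) ≠ 0 := by exact_mod_cast hn.ne'
    refine ⟨ψ, hψ, ?_, ?_, hχe⟩
    · intro m
      obtain ⟨q, hq⟩ := h3 (e.symm (m, 1))
      rw [hχe] at hq
      simp only [MulEquiv.apply_symm_apply, hd1] at hq
      refine ⟨q / d, ?_⟩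
      push_cast
      rw [← hq]
      field_simp
    · intro c
      obtain ⟨q, hq⟩ := h3 (e.symm (1, c))
      rw [hχe] at hq
      simp only [MulEquiv.apply_symm_apply, hn1] at hq
      refine ⟨q / n, ?_⟩
      push_cast
      rw [← hq]
      field_simp
  obtain ⟨χ0, hχ0⟩ := hne
  obtain ⟨-, -, -, hφr, -⟩ := key χ0 hχ0
  refine ⟨fun χ hχ => ?_, fun ψ hψ hr h1 => ?_⟩
  · obtain ⟨ψ, a, b, -, c⟩ := key χ hχ
    exact ⟨ψ, a, b, c⟩
  · have hirr := isIrrChar_mul e hψ hφ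
    rw [hS]
    refine ⟨⟨hirr, ?_⟩, ?_, ?_⟩
    · obtain ⟨n, hn, hn1, -⟩ := hψ.deg
      have hn0 : (n : ℂ) ≠ 0 := by exact_mod_cast hn.ne'
      rw [frob_recip C φ hirr]
      have hc : ∀ c : C, e (c : G) = (1, c) := fun c => by
        rw [← he c, MulEquiv.apply_symm_apply]
      have ho := hφ.orth hφ
      rw [if_pos rfl] at ho
      unfold cInner at ho
      have hsum : ∑ c : C, φ c * (starRingEnd ℂ) (φ c) ≠ 0 := by
        intro h0
        rw [h0, mul_zero] at ho
        exact zero_ne_one ho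
      have : ∑ c : C, φ c * (starRingEnd ℂ) (ψ (e (c : G)).1 * φ (e (c : G)).2)
          = n * ∑ c : C, φ c * (starRingEnd ℂ) (φ c) := by
        rw [Finset.mul_sum]
        refine Finset.sum_congr rfl fun c _ => ?_
        rw [hc, map_mul]
        simp only [hn1, Complex.conj_natCast]
        ring
      rw [this]
      exact mul_ne_zero (inv_ne_zero hcC) (mul_ne_zero hn0 hsum)
    · intro g
      obtain ⟨a, ha⟩ := hr (e g).1
      obtain ⟨b, hb⟩ := hφr (e g).2
      refine ⟨a * b, ?_⟩
      simp only [ha, hb]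
      push_cast
      rfl
    · simpa using h1

/-- The case of degree at least two. -/
lemma big_case (e : G ≃* M × C) (he : ∀ c : C, e.symm (1, c) = c) {φ : C → ℂ}
    (hφ : IsIrrChar C φ) {S : Finset (G → ℂ)}
    (hS : ∀ χ : G → ℂ, χ ∈ S ↔
      (IsConstituent (_root_.Ind C φ) χ ∧ RatValued χ ∧ 1 < (χ 1).re))
    (hne : S.Nonempty) {d : ℕ} (hd : 2 ≤ d) (hd1 : φ 1 = d)
    (H4 : ∀ ψ, IsIrrChar M ψ → RatValued ψ → (ψ ≠ fun _ => 1) → ∃ n : ℕ, 4 ≤ n ∧ ψ 1 = n)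
    (H5 : ∃ ψ, IsIrrChar M ψ ∧ RatValued ψ ∧ ψ 1 = 5) :
    (9 / 2 : ℝ) < (∑ χ ∈ S, (χ 1).re) / S.card := by
  obtain ⟨A, B⟩ := S_desc e he hφ hS hne
  have hdR : (2 : ℝ) ≤ d := by exact_mod_cast hd
  have dich : ∀ χ ∈ S, (χ = (fun g => φ (e g).2) ∧ (χ 1).re = d) ∨ 4 * (d : ℝ) ≤ (χ 1).re := by
    intro χ hχ
    obtain ⟨ψ, hψ, hr, rfl⟩ := A χ hχ
    by_cases h1 : ψ = fun _ => 1
    · left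
      subst h1
      simp [hd1]
    · right
      obtain ⟨n, hn, hn1⟩ := H4 ψ hψ hr h1
      have hnR : (4 : ℝ) ≤ n := by exact_mod_cast hn
      have : ((ψ (e 1).1 * φ (e 1).2)).re = (n : ℝ) * d := by
        simp [hd1, hn1]
      rw [this]
      nlinarith
  have := avg_abs S (fun χ => (χ 1).re) (4 * d) d (by linarith) ?_ ?_ ?_
  · linarith
  · intro χ hχ
    rcases dich χ hχ with h | h
    · exact h.2.ge
    · show (d : ℝ) ≤ (χ 1).re
      linarith
  · intro x hx y hy hxB hyB
    rcases dich x hx with h | h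
    · rcases dich y hy with h' | h'
      · rw [h.1, h'.1]
      · exact absurd hyB (not_lt.2 h')
    · exact absurd hxB (not_lt.2 h)
  · obtain ⟨ψ, hψ, hr, h5⟩ := H5
    have h5d : (ψ 1 * φ 1).re = 5 * (d : ℝ) := by
      rw [h5, hd1]; simp
    refine ⟨_, B ψ hψ hr (by rw [h5d]; linarith), ?_⟩
    have : ((ψ (e 1).1 * φ (e 1).2)).re = 5 * (d : ℝ) := by
      rw [← h5d]; simp
    simp only [this]
    linarith

/-- The case of degree one. -/
lemma small_case (e : G ≃* M × C) (he : ∀ c : C, e.symm (1, c) = c) {φ : C → ℂ}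
    (hφ : IsIrrChar C φ) {S : Finset (G → ℂ)}
    (hS : ∀ χ : G → ℂ, χ ∈ S ↔
      (IsConstituent (_root_.Ind C φ) χ ∧ RatValued χ ∧ 1 < (χ 1).re))
    (hne : S.Nonempty) (hd1 : φ 1 = 1) (L : ℕ) (hL4 : 4 ≤ L) (hL5 : L ≤ 5)
    (H4 : ∀ ψ, IsIrrChar M ψ → RatValued ψ → (ψ ≠ fun _ => 1) → ∃ n : ℕ, L ≤ n ∧ ψ 1 = n)
    (HU : ∀ ψ ψ', IsIrrChar M ψ → RatValued ψ → ψ 1 = 4 → IsIrrChar M ψ' → RatValued ψ' →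
      ψ' 1 = 4 → ψ = ψ')
    (H5 : ∃ ψ, IsIrrChar M ψ ∧ RatValued ψ ∧ ψ 1 = 5) :
    (5 + L : ℝ) / 2 ≤ (∑ χ ∈ S, (χ 1).re) / S.card := by
  obtain ⟨A, B⟩ := S_desc e he hφ hS hne
  have A' : ∀ χ ∈ S, ∃ ψ, IsIrrChar M ψ ∧ RatValued ψ ∧
      (χ = fun g => ψ (e g).1 * φ (e g).2) ∧ ∃ n : ℕ, L ≤ n ∧ ψ 1 = n ∧ (χ 1).re = n := by
    intro χ hχ
    obtain ⟨ψ, hψ, hr, hχe⟩ := A χ hχ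
    have h3 := ((hS χ).1 hχ).2.2
    have h1 : ψ ≠ fun _ => 1 := by
      rintro rfl
      rw [hχe] at h3
      simp [hd1] at h3
    obtain ⟨n, hn, hn1⟩ := H4 ψ hψ hr h1
    refine ⟨ψ, hψ, hr, hχe, n, hn, hn1, ?_⟩
    rw [hχe]
    simp [hd1, hn1]
  have hL5' : (L : ℝ) ≤ 5 := by exact_mod_cast hL5
  apply avg_abs S (fun χ => (χ 1).re) 5 L hL5'
  · intro χ hχ
    obtain ⟨ψ, -, -, -, n, hn, -, hc⟩ := A' χ hχ
    simp only [hc]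
    exact_mod_cast hn
  · intro x hx y hy hxB hyB
    obtain ⟨ψ, a1, a2, a3, n, a4, a5, a6⟩ := A' x hx
    obtain ⟨ψ', b1, b2, b3, n', b4, b5, b6⟩ := A' y hy
    simp only [a6] at hxB
    simp only [b6] at hyB
    have hn : n < 5 := by exact_mod_cast hxB
    have hn' : n' < 5 := by exact_mod_cast hyB
    obtain rfl : n = 4 := by omega
    obtain rfl : n' = 4 := by omega
    have := HU ψ ψ' a1 a2 (by rw [a5]; norm_num) b1 b2 (by rw [b5]; norm_num)
    rw [a3, b3, this]
  · obtain ⟨ψ, hψ, hr, h5⟩ := H5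
    have h5d : (ψ 1 * φ 1).re = 5 := by
      rw [h5, hd1]; simp
    refine ⟨_, B ψ hψ hr (by rw [h5d]; norm_num), ?_⟩
    have : ((ψ (e 1).1 * φ (e 1).2)).re = 5 := by
      rw [← h5d]; simp
    simp only [this]
    exact le_rfl

lemma transfer_deg {A B : Type} [Group A] [Fintype A] [Group B] [Fintype B] (f : A ≃* B) (L : ℕ)
    (H : ∀ ψ : B → ℂ, IsIrrChar B ψ → RatValued ψ → (ψ ≠ fun _ => 1) →
      ∃ n : ℕ, L ≤ n ∧ ψ 1 = n) :
    ∀ ψ : A → ℂ, IsIrrChar A ψ → RatValued ψ → (ψ ≠ fun _ => 1) → ∃ n : ℕ, L ≤ n ∧ ψ 1 = n := by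
  intro ψ h hr h1
  obtain ⟨n, hn, hn1⟩ := H (fun b => ψ (f.symm b)) (h.comp_equiv f.symm) (fun b => hr _) (by
    intro h2
    apply h1
    ext a
    have := congrFun h2 (f a)
    simpa using this)
  refine ⟨n, hn, ?_⟩
  simpa using hn1

lemma transfer_five {A B : Type} [Group A] [Fintype A] [Group B] [Fintype B] (f : A ≃* B)
    (H : ∃ ψ : B → ℂ, IsIrrChar B ψ ∧ RatValued ψ ∧ ψ 1 = 5) :
    ∃ ψ : A → ℂ, IsIrrChar A ψ ∧ RatValued ψ ∧ ψ 1 = 5 := by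
  obtain ⟨ψ, h, hr, h5⟩ := H
  exact ⟨fun a => ψ (f a), h.comp_equiv f, fun a => hr _, by simpa using h5⟩

end assembly

/-- Let `G = M × C` (an internal direct product) with `M ≅ Alt 5` or `Alt 6`, and let
`φ ∈ Irr(C)` be such that `φ^G` has a non-linear rational-valued irreducible constituent.
Then the average degree of the non-linear rational-valued irreducible constituents of
`φ^G` is at least `9/2`, and is strictly greater than `9/2` if `φ(1) > 1` or `M ≅ Alt 6`. -/
theorem stmt7 (G : Type) [Group G] [Fintype G] (M C : Subgroup G)
    [M.Normal] [C.Normal] (hMC : M ⊓ C = ⊥) (hsup : M ⊔ C = ⊤)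
    (hM : Nonempty (↥M ≃* alternatingGroup (Fin 5)) ∨
      Nonempty (↥M ≃* alternatingGroup (Fin 6)))
    (φ : ↥C → ℂ) (hφ : IsIrrChar ↥C φ)
    (S : Finset (G → ℂ))
    (hS : ∀ χ : G → ℂ, χ ∈ S ↔
      (IsConstituent (Ind C φ) χ ∧ RatValued χ ∧ 1 < (χ 1).re))
    (hne : S.Nonempty) :
    (9 / 2 : ℝ) ≤ (∑ χ ∈ S, (χ 1).re) / S.card ∧
      ((1 < (φ 1).re ∨ Nonempty (↥M ≃* alternatingGroup (Fin 6))) →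
        (9 / 2 : ℝ) < (∑ χ ∈ S, (χ 1).re) / S.card) := by
  obtain ⟨e, he⟩ := exists_prod_equiv M C hMC hsup
  obtain ⟨d, hd, hd1, -⟩ := hφ.deg
  have six : Nonempty (↥M ≃* alternatingGroup (Fin 6)) →
      (9 / 2 : ℝ) < (∑ χ ∈ S, (χ 1).re) / S.card := by
    rintro ⟨f⟩
    have H4 := transfer_deg f 5 (fun ψ h hr h1 => A6_deg h hr h1)
    have H5 := transfer_five f A6_exists
    by_cases h2 : 2 ≤ d
    · refine big_case e he hφ hS hne h2 hd1 (fun ψ h hr h1 => ?_) H5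
      obtain ⟨n, hn, hn1⟩ := H4 ψ h hr h1
      exact ⟨n, by omega, hn1⟩
    · have hd' : d = 1 := by omega
      have := small_case e he hφ hS hne (by rw [hd1, hd']; norm_num) 5 (by norm_num) le_rfl H4
        (fun ψ ψ' h hr h4 => by
          exfalso
          obtain ⟨n, hn, hn1⟩ := H4 ψ h hr (by rintro rfl; norm_num at h4)
          rw [h4] at hn1
          have : 4 = n := by exact_mod_cast hn1
          omega) H5
      norm_num at this
      linarith
  rcases hM with ⟨⟨f⟩⟩ | h6
  · have H4 := transfer_deg f 4 (fun ψ h hr h1 => A5_deg h hr h1)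
    have H5 := transfer_five f A5_exists
    by_cases h2 : 2 ≤ d
    · have := big_case e he hφ hS hne h2 hd1 H4 H5
      exact ⟨this.le, fun _ => this⟩
    · have hd' : d = 1 := by omega
      have := small_case e he hφ hS hne (by rw [hd1, hd']; norm_num) 4 le_rfl (by norm_num) H4
        (fun ψ ψ' h hr h4 h' hr' h4' => by
          have := A5_four (h.comp_equiv f.symm) (fun b => hr _) (by simpa using h4)
            (h'.comp_equiv f.symm) (fun b => hr' _) (by simpa using h4')
          ext a
          have := congrFun this (f a)
          simpa using this) H5
      refine ⟨by norm_num at this; linarith, fun h => ?_⟩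
      rcases h with h | h
      · exfalso
        rw [hd1, hd'] at h
        simp at h
      · exact six h
  · exact ⟨(six h6).le, fun _ => six h6⟩
end

section
/- Let N be a normal subgroup of a finite group G and let λ, ψ ∈ Irr(N) be G-invariant with ψ(1) > 1, λψ ∈ Irr(N), and suppose ψ extends to an 𝔽-valued irreducible character χ of G (𝔽 ∈ {ℚ,ℝ,ℂ}). If the set of 𝔽-valued non-linear irreducible constituents of λ^G is nonempty, then the average degree of the 𝔽-valued non-linear irreducible constituents of λ^G together with those of (λψ)^G is at least λ(1)(ψ(1)+1)/2. -/
open scoped BigOperators Classical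
open CategoryTheory

open Representation Module

open scoped ComplexOrder in
lemma aux_char_inv {G V : Type} [Group G] [Fintype G] [AddCommGroup V] [Module ℂ V]
    [FiniteDimensional ℂ V] (ρ : Representation ℂ G V) (g : G) :
    ρ.character g⁻¹ = (starRingEnd ℂ) (ρ.character g) := by
  let b := Module.finBasis ℂ V
  let M : G → Matrix _ _ ℂ := fun g => LinearMap.toMatrix b b (ρ g)
  have hM : ∀ x y, M (x * y) = M x * M y := by
    intro x y
    simp only [M, map_mul, Module.End.mul_eq_comp]
    exact LinearMap.toMatrix_comp b b b _ _
  have hM1 : M 1 = 1 := by simp [M, Module.End.one_eq_id]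
  have htr : ∀ x, ρ.character x = (M x).trace := by
    intro x
    exact LinearMap.trace_eq_matrix_trace ℂ b (ρ x)
  let H : Matrix _ _ ℂ := ∑ x : G, (M x).conjTranspose * M x
  have hinv : (M g).conjTranspose * H * M g = H := by
    simp only [H, Finset.mul_sum, Finset.sum_mul]
    refine Fintype.sum_equiv (Equiv.mulRight g) _ _ ?_
    intro x
    simp only [Equiv.coe_mulRight, hM, Matrix.conjTranspose_mul, Matrix.mul_assoc]
  have hpd : H.PosDef := by
    have : H = 1 + ∑ x ∈ Finset.univ.erase (1 : G), (M x).conjTranspose * M x := by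
      simp only [H]
      rw [← Finset.add_sum_erase _ _ (Finset.mem_univ (1 : G)), hM1]
      simp
    rw [this]
    exact Matrix.PosDef.one.add_posSemidef
      (Matrix.posSemidef_sum _ fun x _ => Matrix.posSemidef_conjTranspose_mul_self _)
  have hdet : IsUnit H.det := (Matrix.isUnit_iff_isUnit_det _).1 hpd.isUnit
  have hgi : M g * M g⁻¹ = 1 := by rw [← hM, mul_inv_cancel, hM1]
  have h2 : (M g).conjTranspose * H = H * M g⁻¹ := by
    calc (M g).conjTranspose * H = ((M g).conjTranspose * H * M g) * M g⁻¹ := by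
          rw [Matrix.mul_assoc _ (M g), hgi, Matrix.mul_one]
      _ = _ := by rw [hinv]
  have h3 : M g⁻¹ = H⁻¹ * ((M g).conjTranspose * H) := by
    rw [h2, ← Matrix.mul_assoc, Matrix.nonsing_inv_mul _ hdet, Matrix.one_mul]
  rw [htr, htr, h3, Matrix.trace_mul_comm, Matrix.mul_assoc, Matrix.mul_nonsing_inv _ hdet,
    Matrix.mul_one, Matrix.trace_conjTranspose]
  rfl

lemma aux_char_compl {G V : Type} [Group G] [AddCommGroup V] [Module ℂ V]
    [FiniteDimensional ℂ V] (ρ : Representation ℂ G V) (U W : Subrepresentation ρ)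
    (h : IsCompl U W) (g : G) :
    ρ.character g = U.toRepresentation.character g + W.toRepresentation.character g := by
  have hc : IsCompl U.toSubmodule W.toSubmodule := by
    constructor
    · rw [disjoint_iff, ← Subrepresentation.toSubmodule_inf, h.inf_eq_bot]; rfl
    · rw [codisjoint_iff, ← Subrepresentation.toSubmodule_sup, h.sup_eq_top]; rfl
  let e := Submodule.prodEquivOfIsCompl _ _ hc
  have : ρ g = e.conj ((U.toRepresentation g).prodMap (W.toRepresentation g)) := by
    ext v
    obtain ⟨⟨u, w⟩, rfl⟩ := e.surjective v
    simp [e, LinearEquiv.conj_apply]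
    rfl
  unfold Representation.character
  rw [this, LinearMap.trace_conj', LinearMap.trace_prodMap']

lemma aux_irr {G V : Type} [Group G] [Fintype G] [AddCommGroup V] [Module ℂ V]
    [FiniteDimensional ℂ V] (ρ : Representation ℂ G V)
    (h : (Nat.card G : ℂ)⁻¹ * ∑ g : G, ρ.character g * ρ.character g⁻¹ = 1) :
    ρ.IsIrreducible := by
  have : Invertible (Nat.card G : ℂ) := invertibleOfNonzero (by simp)
  have hz : ∀ U : Subrepresentation ρ,
      finrank ℂ (IntertwiningMap U.toRepresentation U.toRepresentation) = 0 → U = ⊥ := by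
    intro U hU
    have := Module.finrank_zero_iff.1 hU
    have h0 : IntertwiningMap.id U.toRepresentation = 0 := Subsingleton.elim _ _
    apply Subrepresentation.toSubmodule_injective
    change U.toSubmodule = ⊥
    rw [Submodule.eq_bot_iff]
    intro x hx
    have := congrArg (fun f => f ⟨x, hx⟩) h0
    simpa using congrArg Subtype.val this
  have hnt : Nontrivial (Subrepresentation ρ) := by
    refine ⟨⊥, ⊤, fun hbt => ?_⟩
    have hs : (⊥ : Submodule ℂ V) = ⊤ := congrArg Subrepresentation.toSubmodule hbt
    have : Subsingleton V := by
      rw [← Submodule.subsingleton_iff ℂ]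
      exact subsingleton_of_bot_eq_top hs
    have : ∀ g, ρ.character g = 0 := by
      intro g
      unfold Representation.character
      rw [Subsingleton.elim (ρ g) 0, map_zero]
    simp [this] at h
  have key : ∀ U : Subrepresentation ρ, U = ⊥ ∨ U = ⊤ := by
    intro U
    obtain ⟨W, hW⟩ := exists_isCompl U
    have e1 := card_inv_mul_sum_char_mul_char_eq_finrank U.toRepresentation U.toRepresentation
    have e2 := card_inv_mul_sum_char_mul_char_eq_finrank U.toRepresentation W.toRepresentation
    have e3 := card_inv_mul_sum_char_mul_char_eq_finrank W.toRepresentation U.toRepresentation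
    have e4 := card_inv_mul_sum_char_mul_char_eq_finrank W.toRepresentation W.toRepresentation
    simp only [aux_char_compl ρ U W hW, add_mul, mul_add, Finset.sum_add_distrib] at h
    rw [e1, e2, e3, e4] at h
    norm_cast at h
    by_cases hU : finrank ℂ (IntertwiningMap U.toRepresentation U.toRepresentation) = 0
    · exact Or.inl (hz U hU)
    · right
      have := hz W (by omega)
      subst this
      simpa using hW.sup_eq_top
  exact { eq_bot_or_eq_top := key }

lemma aux_irr_norm {G V : Type} [Group G] [Fintype G] [AddCommGroup V] [Module ℂ V]
    [FiniteDimensional ℂ V] (ρ : Representation ℂ G V) (hρ : ρ.IsIrreducible) :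
    (Nat.card G : ℂ)⁻¹ * ∑ g : G, ρ.character g * ρ.character g⁻¹ = 1 := by
  have : Invertible (Nat.card G : ℂ) := invertibleOfNonzero (by simp)
  rw [card_inv_mul_sum_char_mul_char_eq_finrank]
  simp

lemma aux_isIrrChar_iff {G : Type} [Group G] [Fintype G] (χ : G → ℂ) :
    IsIrrChar G χ ↔ ∃ (V : Type) (_ : AddCommGroup V) (_ : Module ℂ V)
      (_ : FiniteDimensional ℂ V) (ρ : Representation ℂ G V),
      ρ.IsIrreducible ∧ ρ.character = χ := by
  have hc : (Nat.card G : ℂ) ≠ 0 := by simp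
  constructor
  · rintro ⟨V, hV, h⟩
    refine ⟨V, inferInstance, inferInstance, inferInstance, V.ρ, ?_, funext h⟩
    apply aux_irr
    have := (FDRep.simple_iff_char_is_norm_one V).1 hV
    change (Nat.card G : ℂ)⁻¹ * ∑ g : G, V.character g * V.character g⁻¹ = 1
    rw [this, inv_mul_cancel₀ hc]
  · rintro ⟨V, _, _, _, ρ, hρ, rfl⟩
    refine ⟨FDRep.of ρ, ?_, fun g => rfl⟩
    rw [FDRep.simple_iff_char_is_norm_one]
    have := aux_irr_norm ρ hρ
    change ∑ g : G, ρ.character g * ρ.character g⁻¹ = Nat.card G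
    rw [inv_mul_eq_one₀ hc] at this
    exact this.symm

lemma aux_isotypic {N L : Type} [Group N] [Fintype N] [AddCommGroup L] [Module ℂ L]
    [FiniteDimensional ℂ L] (τ : Representation ℂ N L) (hτ : τ.IsIrreducible) (c : ℂ)
    (hc : c ≠ 0) (d : ℕ) : ∀ (V : Type) [AddCommGroup V] [Module ℂ V]
    [FiniteDimensional ℂ V] (σ : Representation ℂ N V), finrank ℂ V ≤ d →
    (∑ n : N, τ.character n⁻¹ • σ n = c • LinearMap.id) →
    ∃ e : ℕ, ∀ n, σ.character n = e * τ.character n := by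
  have : Invertible (Nat.card N : ℂ) := invertibleOfNonzero (by simp)
  induction d with
  | zero =>
    intro V _ _ _ σ hd hE
    have : Subsingleton V := Module.finrank_zero_iff.1 (by omega : finrank ℂ V = 0)
    refine ⟨0, fun n => ?_⟩
    unfold Representation.character
    rw [Subsingleton.elim (σ n) 0, map_zero]; simp
  | succ d ih =>
    intro V _ _ _ σ hd hE
    by_cases h0 : finrank ℂ V = 0
    · exact ih V σ (by omega) hE
    have h1 : ∑ n : N, σ.character n * τ.character n⁻¹ ≠ 0 := by
      have := congrArg (LinearMap.trace ℂ V) hE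
      rw [map_sum, map_smul, LinearMap.trace_id] at this
      have h2 : ∑ n : N, σ.character n * τ.character n⁻¹ = c • (finrank ℂ V : ℂ) := by
        rw [← this]
        refine Finset.sum_congr rfl fun n _ => ?_
        rw [map_smul, smul_eq_mul, mul_comm]; rfl
      rw [h2]
      simp [hc, h0]
    have h3 := card_inv_mul_sum_char_mul_char_eq_finrank τ σ
    have h4 : finrank ℂ (IntertwiningMap τ σ) ≠ 0 := by
      intro h
      rw [h] at h3
      simp [h1] at h3
    obtain ⟨f, hf⟩ : ∃ f : IntertwiningMap τ σ, f ≠ 0 := by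
      by_contra! hcon
      exact h4 (Module.finrank_zero_iff.2 ⟨fun a b => by rw [hcon a, hcon b]⟩)
    have hinj := (IsIrreducible.injective_or_eq_zero f).resolve_right hf
    obtain ⟨W, hW⟩ := exists_isCompl f.range
    have hchar := aux_char_compl σ _ _ hW
    have hU : f.range.toRepresentation.character = τ.character := by
      symm
      refine char_iso (Representation.Equiv.mk (LinearEquiv.ofInjective f.toLinearMap hinj) ?_)
      intro g
      ext v
      exact IntertwiningMap.isIntertwining τ σ f g v
    have hEW : ∑ n : N, τ.character n⁻¹ • W.toRepresentation n = c • LinearMap.id := by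
      ext w
      have := congrArg (fun T => T (w : V)) hE
      simp only [LinearMap.sum_apply, LinearMap.smul_apply] at this
      simp only [LinearMap.sum_apply, LinearMap.smul_apply, AddSubmonoidClass.coe_finsetSum]
      exact this
    have hdim : finrank ℂ W.toSubmodule ≤ d := by
      have h5 := hchar 1
      rw [char_one, hU, char_one, char_one] at h5
      norm_cast at h5
      have : finrank ℂ L ≠ 0 := by
        intro hL
        have : Subsingleton L := Module.finrank_zero_iff.1 hL
        apply hf
        ext v
        rw [Subsingleton.elim v 0]; simp
      omega
    obtain ⟨e, he⟩ := ih W.toSubmodule W.toRepresentation hdim hEW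
    refine ⟨e + 1, fun n => ?_⟩
    rw [hchar, hU, he]
    push_cast; ring

lemma aux_clifford {G : Type} [Group G] [Fintype G] (N : Subgroup G) [hN : N.Normal]
    {V L : Type} [AddCommGroup V] [Module ℂ V] [FiniteDimensional ℂ V]
    [AddCommGroup L] [Module ℂ L] [FiniteDimensional ℂ L]
    (ρ : Representation ℂ G V) (hρ : ρ.IsIrreducible)
    (τ : Representation ℂ N L) (hτ : τ.IsIrreducible)
    (hinv : ∀ (g : G) (n : ↥N),
      τ.character ⟨g * n * g⁻¹, hN.conj_mem n n.2 g⟩ = τ.character n)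
    (hne : ∑ n : N, τ.character n⁻¹ * ρ.character n ≠ 0) :
    ∃ e : ℕ, ∀ n : N, ρ.character n = e * τ.character n := by
  let σ : Representation ℂ N V := ρ.comp N.subtype
  let E : V →ₗ[ℂ] V := ∑ n : N, τ.character n⁻¹ • ρ n
  have hE : ∀ g, E ∘ₗ ρ g = ρ g ∘ₗ E := by
    intro g
    change E * ρ g = ρ g * E
    simp only [E, Finset.sum_mul, Finset.mul_sum]
    refine (Fintype.sum_equiv (MulAut.conjNormal g).toEquiv _ _ ?_).symm
    intro n
    have h1 : ((MulAut.conjNormal g n : N) : G) = g * n * g⁻¹ := MulAut.conjNormal_apply g n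
    have h2 : τ.character (MulAut.conjNormal g n)⁻¹ = τ.character n⁻¹ := by
      rw [← hinv g n⁻¹]
      congr 1
      ext
      simp [h1, mul_assoc]
    change _ = (τ.character (MulAut.conjNormal g n)⁻¹ • ρ ((MulAut.conjNormal g n : N) : G)) * ρ g
    rw [h2, h1, mul_smul_comm, smul_mul_assoc, ← map_mul, ← map_mul]
    simp
  let EE : IntertwiningMap ρ ρ := ⟨E, hE⟩
  obtain ⟨c, hc⟩ :=
    (IsIrreducible.algebraMap_intertwiningMap_bijective_of_isAlgClosed (ρ := ρ)).2 EE
  have hcE : E = c • LinearMap.id := by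
    have := congrArg IntertwiningMap.toLinearMap hc
    exact this.symm
  have hc0 : c ≠ 0 := by
    rintro rfl
    apply hne
    have := congrArg (LinearMap.trace ℂ V) hcE
    rw [zero_smul, map_zero, map_sum] at this
    rw [← this]
    refine Finset.sum_congr rfl fun n _ => ?_
    rw [map_smul]; rfl
  exact aux_isotypic τ hτ c hc0 _ V σ le_rfl hcE

open TensorProduct in
lemma aux_rTensor_inj {V V' W : Type} [AddCommGroup V] [Module ℂ V] [AddCommGroup V']
    [Module ℂ V'] [AddCommGroup W] [Module ℂ W] [Nontrivial W] (f f' : V →ₗ[ℂ] V')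
    (h : f.rTensor W = f'.rTensor W) : f = f' := by
  obtain ⟨w, hw⟩ := exists_ne (0 : W)
  obtain ⟨φ, hφ⟩ : ∃ φ : Module.Dual ℂ W, φ w ≠ 0 := by
    by_contra! hcon
    exact hw ((Module.forall_dual_apply_eq_zero_iff ℂ w).1 hcon)
  ext v
  have h1 : f v ⊗ₜ[ℂ] w = f' v ⊗ₜ[ℂ] w := by
    simpa using congrArg (fun T => T (v ⊗ₜ[ℂ] w)) h
  have h2 := congrArg (fun t => TensorProduct.rid ℂ V' (φ.lTensor V' t)) h1
  simp only [LinearMap.lTensor_tmul, TensorProduct.rid_tmul] at h2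
  exact smul_right_injective _ hφ h2

lemma aux_tensor_finrank {G : Type} [Group G] [Fintype G] (N : Subgroup G)
    {V V' W : Type} [AddCommGroup V] [Module ℂ V] [FiniteDimensional ℂ V]
    [AddCommGroup V'] [Module ℂ V'] [FiniteDimensional ℂ V']
    [AddCommGroup W] [Module ℂ W] [FiniteDimensional ℂ W] [Nontrivial W]
    (ρ : Representation ℂ G V) (ρ' : Representation ℂ G V') (ω : Representation ℂ G W)
    (h : ∑ n : N, ρ'.character n * ρ.character (n : G)⁻¹ =
      ∑ n : N, (ρ'.character n * ω.character n) *
        (ρ.character (n : G)⁻¹ * ω.character (n : G)⁻¹)) :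
    finrank ℂ (IntertwiningMap ρ ρ') =
      finrank ℂ (IntertwiningMap (tprod ρ ω) (tprod ρ' ω)) := by
  have : Invertible (Nat.card N : ℂ) := invertibleOfNonzero (by simp)
  let r : Representation ℂ N V := ρ.comp N.subtype
  let r' : Representation ℂ N V' := ρ'.comp N.subtype
  let o : Representation ℂ N W := ω.comp N.subtype
  let T : IntertwiningMap r r' →ₗ[ℂ] IntertwiningMap (tprod r o) (tprod r' o) :=
    { toFun := fun f => IntertwiningMap.rTensor o f
      map_add' := fun f g => IntertwiningMap.rTensor_add _ _
      map_smul' := fun a f => IntertwiningMap.rTensor_smul _ _ }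
  let T' : IntertwiningMap ρ ρ' →ₗ[ℂ] IntertwiningMap (tprod ρ ω) (tprod ρ' ω) :=
    { toFun := fun f => IntertwiningMap.rTensor ω f
      map_add' := fun f g => IntertwiningMap.rTensor_add _ _
      map_smul' := fun a f => IntertwiningMap.rTensor_smul _ _ }
  have hT : Function.Injective T := by
    intro f f' hff
    apply IntertwiningMap.ext
    exact aux_rTensor_inj (W := W) _ _ (congrArg IntertwiningMap.toLinearMap hff)
  have hT' : Function.Injective T' := by
    intro f f' hff
    apply IntertwiningMap.ext
    exact aux_rTensor_inj (W := W) _ _ (congrArg IntertwiningMap.toLinearMap hff)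
  have hfr : finrank ℂ (IntertwiningMap r r') =
      finrank ℂ (IntertwiningMap (tprod r o) (tprod r' o)) := by
    have e1 := card_inv_mul_sum_char_mul_char_eq_finrank r r'
    have e2 := card_inv_mul_sum_char_mul_char_eq_finrank (tprod r o) (tprod r' o)
    simp only [char_tensor, Pi.mul_apply] at e2
    have h' : ∑ n : N, r'.character n * r.character n⁻¹ = ∑ n : N,
        (r'.character n * o.character n) * (r.character n⁻¹ * o.character n⁻¹) := h
    rw [h', e2] at e1
    exact_mod_cast e1.symm
  have hTs : Function.Surjective T :=
    (LinearMap.injective_iff_surjective_of_finrank_eq_finrank hfr).1 hT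
  have hTs' : Function.Surjective T' := by
    intro F
    let F0 : IntertwiningMap (tprod r o) (tprod r' o) :=
      ⟨F.toLinearMap, fun n => F.isIntertwining' (n : G)⟩
    obtain ⟨f, hf⟩ := hTs F0
    have hfF : f.toLinearMap.rTensor W = F.toLinearMap := congrArg IntertwiningMap.toLinearMap hf
    refine ⟨⟨f.toLinearMap, fun g => ?_⟩, IntertwiningMap.ext hfF⟩
    apply aux_rTensor_inj (W := W)
    have h1 := F.isIntertwining' g
    rw [← hfF] at h1
    change f.toLinearMap.rTensor W ∘ₗ TensorProduct.map (ρ g) (ω g) =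
      TensorProduct.map (ρ' g) (ω g) ∘ₗ f.toLinearMap.rTensor W at h1
    have h2 := congrArg (fun S => S ∘ₗ (ω g⁻¹).lTensor V) h1
    have hid : ω g ∘ₗ ω g⁻¹ = LinearMap.id := by
      rw [← Module.End.mul_eq_comp, ← map_mul, mul_inv_cancel, map_one]; rfl
    simpa only [LinearMap.rTensor, LinearMap.lTensor, ← TensorProduct.map_comp,
      LinearMap.comp_id, LinearMap.id_comp, hid] using h2
  exact (LinearEquiv.ofBijective T' ⟨hT', hTs'⟩).finrank_eq

lemma aux_frob {G : Type} [Group G] [Fintype G] (N : Subgroup G) (f : N → ℂ)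
    (θ : G → ℂ) (hθ : ∀ g x : G, θ (x * g * x⁻¹) = θ g) :
    cInner (_root_.Ind N f) θ = (Nat.card N : ℂ)⁻¹ * ∑ n : N, f n * (starRingEnd ℂ) (θ n) := by
  have hG : (Fintype.card G : ℂ) ≠ 0 := by simp
  have key : ∀ x : G, ∑ g : G, (if h : x⁻¹ * g * x ∈ N then f ⟨x⁻¹ * g * x, h⟩ else 0) *
      (starRingEnd ℂ) (θ g) = ∑ n : N, f n * (starRingEnd ℂ) (θ n) := by
    intro x
    have h1 : ∑ g : G, (if h : x⁻¹ * g * x ∈ N then f ⟨x⁻¹ * g * x, h⟩ else 0) *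
      (starRingEnd ℂ) (θ g) = ∑ g : G, (if h : g ∈ N then f ⟨g, h⟩ else 0) *
      (starRingEnd ℂ) (θ g) := by
      refine Fintype.sum_equiv (MulAut.conj x⁻¹).toEquiv _ _ ?_
      intro g
      have : (MulAut.conj x⁻¹).toEquiv g = x⁻¹ * g * x := by simp
      rw [this]
      congr 2
      have := hθ g x⁻¹
      rw [inv_inv] at this
      exact this.symm
    rw [h1]
    rw [← Finset.sum_filter_of_ne (p := fun g => g ∈ N)]
    · rw [Finset.sum_subtype (p := fun g => g ∈ N) _ (by simp)]
      refine Finset.sum_congr rfl fun n _ => ?_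
      rw [dif_pos n.2]
    · intro g _ hg
      by_contra hgN
      simp [hgN] at hg
  have h2 : ∑ g : G, _root_.Ind N f g * (starRingEnd ℂ) (θ g) = (Nat.card N : ℂ)⁻¹ *
      ∑ g : G, ∑ x : G, (if h : x⁻¹ * g * x ∈ N then f ⟨x⁻¹ * g * x, h⟩ else 0) *
      (starRingEnd ℂ) (θ g) := by
    rw [Finset.mul_sum]
    refine Finset.sum_congr rfl fun g _ => ?_
    unfold _root_.Ind
    rw [← Finset.sum_mul, mul_assoc]
  unfold cInner
  rw [h2, Finset.sum_comm]
  simp only [key, Finset.sum_const, Finset.card_univ, nsmul_eq_mul]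
  field_simp

lemma aux_norm {G : Type} [Group G] [Fintype G] {χ : G → ℂ} (h : IsIrrChar G χ) :
    ∑ g : G, χ g * χ g⁻¹ = Nat.card G := by
  obtain ⟨V, _, _, _, ρ, hρ, rfl⟩ := (aux_isIrrChar_iff χ).1 h
  have hc : (Nat.card G : ℂ) ≠ 0 := by simp
  have := aux_irr_norm ρ hρ
  rw [inv_mul_eq_one₀ hc] at this
  exact this.symm

lemma aux_conj {G : Type} [Group G] [Fintype G] {χ : G → ℂ} (h : IsIrrChar G χ) (g : G) :
    (starRingEnd ℂ) (χ g) = χ g⁻¹ := by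
  obtain ⟨V, _, _, _, ρ, hρ, rfl⟩ := (aux_isIrrChar_iff χ).1 h
  exact (aux_char_inv ρ g).symm

lemma aux_class {G : Type} [Group G] [Fintype G] {χ : G → ℂ} (h : IsIrrChar G χ) (g x : G) :
    χ (x * g * x⁻¹) = χ g := by
  obtain ⟨V, _, _, _, ρ, hρ, rfl⟩ := (aux_isIrrChar_iff χ).1 h
  exact char_conj ρ g x

lemma aux_nat {G : Type} [Group G] [Fintype G] {χ : G → ℂ} (h : IsIrrChar G χ) :
    ∃ d : ℕ, 0 < d ∧ χ 1 = d := by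
  have hn := aux_norm h
  obtain ⟨V, _, _, _, ρ, hρ, rfl⟩ := (aux_isIrrChar_iff χ).1 h
  refine ⟨finrank ℂ V, ?_, char_one ρ⟩
  rw [Nat.pos_iff_ne_zero]
  intro h0
  have : Subsingleton V := Module.finrank_zero_iff.1 h0
  have h2 : ∀ g, ρ.character g = 0 := by
    intro g
    unfold Representation.character
    rw [Subsingleton.elim (ρ g) 0, map_zero]
  simp only [h2, mul_zero, Finset.sum_const_zero] at hn
  simp at hn
  exact absurd hn.symm (by simp)

lemma aux_constituent {G : Type} [Group G] [Fintype G] (N : Subgroup G) [hN : N.Normal]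
    {f : N → ℂ} (hf : IsIrrChar N f)
    (hinv : ∀ (g : G) (n : ↥N), f ⟨g * n * g⁻¹, hN.conj_mem n n.2 g⟩ = f n)
    {θ : G → ℂ} (h : IsConstituent (_root_.Ind N f) θ) :
    ∃ e : ℕ, 0 < e ∧ ∀ n : N, θ n = e * f n := by
  obtain ⟨hθ, hne⟩ := h
  rw [aux_frob N f θ (aux_class hθ)] at hne
  have hs : ∑ n : N, f n⁻¹ * θ n ≠ 0 := by
    intro h0
    apply hne
    rw [mul_eq_zero]
    right
    rw [← h0]
    refine Fintype.sum_equiv (Equiv.inv N) _ _ ?_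
    intro n
    simp [aux_conj hθ]
  obtain ⟨d, hd, hd1⟩ := aux_nat hθ
  obtain ⟨V, _, _, _, ρ, hρ, rfl⟩ := (aux_isIrrChar_iff θ).1 hθ
  obtain ⟨L, _, _, _, τ, hτ, rfl⟩ := (aux_isIrrChar_iff f).1 hf
  obtain ⟨e, he⟩ := aux_clifford N ρ hρ τ hτ hinv hs
  refine ⟨e, ?_, he⟩
  rw [Nat.pos_iff_ne_zero]
  rintro rfl
  have h1 := he 1
  simp only [Subgroup.coe_one, hd1] at h1
  simp at h1
  omega

lemma aux_prod {G : Type} [Group G] [Fintype G] (N : Subgroup G)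
    {lam psi : N → ℂ} (hlam : IsIrrChar N lam)
    (hprod : IsIrrChar ↥N (fun n => lam n * psi n))
    {χ : G → ℂ} (hχ : IsIrrChar G χ) (hres : ∀ n : ↥N, χ n = psi n)
    {θ θ' : G → ℂ} (hθ : IsIrrChar G θ) (hθ' : IsIrrChar G θ') {e e' : ℕ}
    (he : ∀ n : N, θ n = e * lam n) (he' : ∀ n : N, θ' n = e' * lam n) :
    IsIrrChar G (θ * χ) ∧ (θ * χ = θ' * χ → θ = θ') := by
  have : Invertible (Nat.card G : ℂ) := invertibleOfNonzero (by simp)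
  have n1 := aux_norm hlam
  have n2 := aux_norm hprod
  obtain ⟨d, hd, hd1⟩ := aux_nat hχ
  obtain ⟨V, _, _, _, ρ, hρ, rfl⟩ := (aux_isIrrChar_iff θ).1 hθ
  obtain ⟨V', _, _, _, ρ', hρ', rfl⟩ := (aux_isIrrChar_iff θ').1 hθ'
  obtain ⟨W, _, _, _, ω, hω, rfl⟩ := (aux_isIrrChar_iff χ).1 hχ
  have hW : Nontrivial W := by
    rw [char_one] at hd1
    norm_cast at hd1
    exact Module.nontrivial_of_finrank_pos (R := ℂ) (by omega)
  have gen : ∀ a b : ℂ, ∑ n : N, (a * lam n) * (b * lam n⁻¹) =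
      ∑ n : N, ((a * lam n) * psi n) * ((b * lam n⁻¹) * psi n⁻¹) := by
    intro a b
    have l1 : ∑ n : N, (a * lam n) * (b * lam n⁻¹) = a * b * ∑ n : N, lam n * lam n⁻¹ := by
      rw [Finset.mul_sum]; exact Finset.sum_congr rfl fun n _ => by ring
    have l2 : ∑ n : N, ((a * lam n) * psi n) * ((b * lam n⁻¹) * psi n⁻¹) =
        a * b * ∑ n : N, (lam n * psi n) * (lam n⁻¹ * psi n⁻¹) := by
      rw [Finset.mul_sum]; exact Finset.sum_congr rfl fun n _ => by ring
    rw [l1, l2, n1, n2]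
  have hei : ∀ n : N, ρ.character (n : G)⁻¹ = e * lam n⁻¹ := fun n => he n⁻¹
  have hwi : ∀ n : N, ω.character (n : G)⁻¹ = psi n⁻¹ := fun n => hres n⁻¹
  have f1 := aux_tensor_finrank N ρ ρ ω (by
    simp only [he, hei, hres, hwi]; exact gen _ _)
  have f2 := aux_tensor_finrank N ρ ρ' ω (by
    simp only [he', hei, hres, hwi]; exact gen _ _)
  have g1 := card_inv_mul_sum_char_mul_char_eq_finrank (tprod ρ ω) (tprod ρ ω)
  have g2 := card_inv_mul_sum_char_mul_char_eq_finrank (tprod ρ ω) (tprod ρ' ω)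
  rw [← f1, IsIrreducible.finrank_intertwiningMap_self, Nat.cast_one] at g1
  constructor
  · exact (aux_isIrrChar_iff _).2 ⟨_, _, _, inferInstance, tprod ρ ω, aux_irr _ g1,
      char_tensor ρ ω⟩
  · intro heq
    rw [← char_tensor, ← char_tensor] at heq
    rw [← heq, g1, ← f2] at g2
    have h4 : finrank ℂ (IntertwiningMap ρ ρ') ≠ 0 := by
      intro h
      rw [h] at g2
      simp at g2
    obtain ⟨f, hf⟩ : ∃ f : IntertwiningMap ρ ρ', f ≠ 0 := by
      by_contra! hcon
      exact h4 (Module.finrank_zero_iff.2 ⟨fun a b => by rw [hcon a, hcon b]⟩)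
    exact char_iso (f.ofBijective ((IsIrreducible.bijective_or_eq_zero f).resolve_right hf))

/-- Let `λ, ψ ∈ Irr(N)` be `G`-invariant with `ψ(1) > 1`, `λψ ∈ Irr(N)`, and suppose `ψ`
extends to an `𝔽`-valued `χ ∈ Irr(G)`.  If `λ^G` has an `𝔽`-valued non-linear
irreducible constituent, then the average degree of the `𝔽`-valued non-linear irreducible
constituents of `λ^G` together with those of `(λψ)^G` is at least `λ(1)(ψ(1)+1)/2`. -/
theorem stmt19 (G : Type) [Group G] [Fintype G] (N : Subgroup G) [hN : N.Normal]
    (lam psi : ↥N → ℂ) (hlam : IsIrrChar ↥N lam) (hpsi : IsIrrChar ↥N psi)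
    (hlaminv : ∀ (g : G) (n : ↥N), lam ⟨g * n * g⁻¹, hN.conj_mem n n.2 g⟩ = lam n)
    (hpsiinv : ∀ (g : G) (n : ↥N), psi ⟨g * n * g⁻¹, hN.conj_mem n n.2 g⟩ = psi n)
    (hdeg : 1 < (psi 1).re)
    (hprod : IsIrrChar ↥N (fun n => lam n * psi n))
    (P : (G → ℂ) → Prop)
    (hP : P = RatValued ∨ P = RealValued ∨ P = fun _ => True)
    (χ : G → ℂ) (hχ : IsIrrChar G χ) (hχP : P χ) (hres : ∀ n : ↥N, χ n = psi n)
    (S1 : Finset (G → ℂ))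
    (hS1 : ∀ θ : G → ℂ, θ ∈ S1 ↔
      (IsConstituent (Ind N lam) θ ∧ P θ ∧ 1 < (θ 1).re))
    (hne : S1.Nonempty)
    (S : Finset (G → ℂ))
    (hS : ∀ θ : G → ℂ, θ ∈ S ↔
      ((IsConstituent (Ind N lam) θ ∨
        IsConstituent (Ind N (fun n => lam n * psi n)) θ) ∧ P θ ∧ 1 < (θ 1).re)) :
    (lam 1).re * ((psi 1).re + 1) / 2 ≤ (∑ θ ∈ S, (θ 1).re) / S.card := by
  obtain ⟨l, hl, hl1⟩ := aux_nat hlam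
  obtain ⟨p, hp, hp1⟩ := aux_nat hpsi
  have hprodinv : ∀ (g : G) (n : ↥N),
      (fun n => lam n * psi n) ⟨g * n * g⁻¹, hN.conj_mem n n.2 g⟩ =
        (fun n => lam n * psi n) n := by
    intro g n
    simp only [hlaminv, hpsiinv]
  have hp2 : 1 < p := by
    rw [hp1] at hdeg
    simpa using hdeg
  have hPmul : ∀ θ, P θ → P (θ * χ) := by
    intro θ hθ
    rcases hP with rfl | rfl | rfl
    · intro g
      obtain ⟨a, ha⟩ := hθ g
      obtain ⟨b, hb⟩ := hχP g
      exact ⟨a * b, by simp [ha, hb]⟩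
    · intro g
      have h1 : (θ g).im = 0 := hθ g
      have h2 : (χ g).im = 0 := hχP g
      simp [h1, h2]
    · trivial
  have hχ1 : χ 1 = p := by
    rw [← hp1]; exact hres 1
  -- degrees of the constituents
  have d1 : ∀ θ, IsConstituent (_root_.Ind N lam) θ → (l : ℝ) ≤ (θ 1).re := by
    intro θ h
    obtain ⟨e, he, hres'⟩ := aux_constituent N hlam hlaminv h
    have h1 := hres' 1
    rw [Subgroup.coe_one, hl1] at h1
    rw [h1]
    norm_cast
    exact Nat.le_mul_of_pos_left l he
  have d2 : ∀ θ, IsConstituent (_root_.Ind N (fun n => lam n * psi n)) θ →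
      (l * p : ℝ) ≤ (θ 1).re := by
    intro θ h
    obtain ⟨e, he, hres'⟩ := aux_constituent N hprod hprodinv h
    have h1 := hres' 1
    rw [Subgroup.coe_one, hl1, hp1] at h1
    rw [h1]
    norm_cast
    exact Nat.le_mul_of_pos_left _ he
  -- the two sets of constituents are disjoint
  have hdisj : ∀ θ, IsConstituent (_root_.Ind N lam) θ →
      ¬ IsConstituent (_root_.Ind N (fun n => lam n * psi n)) θ := by
    intro θ h h'
    obtain ⟨e, he, h1⟩ := aux_constituent N hlam hlaminv h
    obtain ⟨e', he', h2⟩ := aux_constituent N hprod hprodinv h'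
    have n1 := aux_norm hlam
    have n2 := aux_norm hprod
    have s1 : ∑ n : N, θ n * θ (n⁻¹ : N) = (e : ℂ) ^ 2 * Nat.card N := by
      rw [← n1, Finset.mul_sum]
      exact Finset.sum_congr rfl fun n _ => by rw [h1, h1]; ring
    have s2 : ∑ n : N, θ n * θ (n⁻¹ : N) = (e' : ℂ) ^ 2 * Nat.card N := by
      rw [← n2, Finset.mul_sum]
      exact Finset.sum_congr rfl fun n _ => by rw [h2, h2]; ring
    have hc : (Nat.card N : ℂ) ≠ 0 := by simp
    have hee := mul_right_cancel₀ hc (s1.symm.trans s2)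
    have hee' : e = e' := by
      have : e ^ 2 = e' ^ 2 := by exact_mod_cast hee
      exact Nat.pow_left_injective (n := 2) (by norm_num) this
    subst hee'
    have h3 := (h1 1).symm.trans (h2 1)
    simp only [hl1, hp1] at h3
    have h4 : e * l = e * (l * p) := by exact_mod_cast h3
    have h5 : l * 1 = l * p := by
      rw [mul_one]; exact Nat.eq_of_mul_eq_mul_left he h4
    have := Nat.eq_of_mul_eq_mul_left hl h5
    omega
  -- the constituents over `λψ`
  let S2 := S \ S1
  have hS2 : ∀ θ, θ ∈ S2 ↔ (IsConstituent (_root_.Ind N (fun n => lam n * psi n)) θ ∧ P θ ∧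
      1 < (θ 1).re) := by
    intro θ
    simp only [S2, Finset.mem_sdiff, hS, hS1]
    have := hdisj θ
    tauto
  have hsub : S1 ⊆ S := by
    intro θ h
    rw [hS1] at h
    rw [hS]
    tauto
  have hcard : S1.card ≤ S2.card := by
    apply Finset.card_le_card_of_injOn (fun θ => θ * χ)
    · intro θ hθ
      have hθ := (hS1 θ).1 hθ
      obtain ⟨e, he, h1⟩ := aux_constituent N hlam hlaminv hθ.1
      have hirr := (aux_prod N hlam hprod hχ hres hθ.1.1 hθ.1.1 h1 h1).1
      refine (hS2 _).2 ⟨⟨hirr, ?_⟩, hPmul _ hθ.2.1, ?_⟩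
      · rw [aux_frob _ _ _ (aux_class hirr)]
        have n2 := aux_norm hprod
        have hc : (Nat.card N : ℂ) ≠ 0 := by simp
        have : ∑ n : N, lam n * psi n * (starRingEnd ℂ) ((θ * χ) n) = e * Nat.card N := by
          rw [← n2, Finset.mul_sum]
          refine Finset.sum_congr rfl fun n _ => ?_
          rw [aux_conj hirr]
          have e1 : (θ * χ) (n : G)⁻¹ = e * lam n⁻¹ * psi n⁻¹ := by
            rw [← h1, ← hres]; rfl
          rw [e1]; ring
        rw [this]
        have : (e : ℂ) ≠ 0 := by exact_mod_cast he.ne'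
        field_simp
        exact this
      · have : ((θ * χ) 1).re = (θ 1).re * p := by
          simp [hχ1]
        rw [this]
        have h2 : (1 : ℝ) < p := by exact_mod_cast hp2
        nlinarith [hθ.2.2]
    · intro θ hθ θ' hθ' heq
      have hθ := (hS1 θ).1 hθ
      have hθ' := (hS1 θ').1 hθ'
      obtain ⟨e, he, h1⟩ := aux_constituent N hlam hlaminv hθ.1
      obtain ⟨e', he', h1'⟩ := aux_constituent N hlam hlaminv hθ'.1
      exact (aux_prod N hlam hprod hχ hres hθ.1.1 hθ'.1.1 h1 h1').2 heq
  have hsum : ∑ θ ∈ S, (θ 1).re = ∑ θ ∈ S2, (θ 1).re + ∑ θ ∈ S1, (θ 1).re :=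
    (Finset.sum_sdiff hsub).symm
  have hcS : (S.card : ℝ) = S2.card + S1.card := by
    have := Finset.card_sdiff_add_card_eq_card hsub
    exact_mod_cast this.symm
  have b1 : (S1.card : ℝ) * l ≤ ∑ θ ∈ S1, (θ 1).re := by
    rw [← nsmul_eq_mul]
    exact Finset.card_nsmul_le_sum _ _ _ fun θ h => d1 θ ((hS1 θ).1 h).1
  have b2 : (S2.card : ℝ) * (l * p) ≤ ∑ θ ∈ S2, (θ 1).re := by
    rw [← nsmul_eq_mul]
    exact Finset.card_nsmul_le_sum _ _ _ fun θ h => d2 θ ((hS2 θ).1 h).1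
  have hpos : 0 < (S1.card : ℝ) := by exact_mod_cast hne.card_pos
  have hcR : (S1.card : ℝ) ≤ S2.card := by exact_mod_cast hcard
  rw [hsum, hcS, le_div_iff₀ (by linarith), hl1, hp1]
  simp only [Complex.natCast_re]
  have hpR : (1 : ℝ) < p := by exact_mod_cast hp2
  have hlR : (0 : ℝ) < l := by exact_mod_cast hl
  have := mul_nonneg (mul_nonneg hlR.le (sub_nonneg.2 hcR)) (sub_nonneg.2 hpR.le)
  nlinarith
end
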